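/- arXiv:2403.00680 — 2 statements merged into one kernel-verified Lean document; each statement's English description precedes it below -/
import Mathlib

section
/- Let m, n ≥ 3 be integers. There is an absolute constant C > 0 with the following property. Let α_1, …, α_m ∈ ℝ², guessing parameters c_1,…,c_m ∈ [c_min, 1/2) with c_min ∈ (0,1/2), E = max_{i∈[m]} ln(1/c_i), and Y ∈ {−1,1}^{m×n}. For j ∈ [n] let X_{(j)} ∈ ℝ^{m×2} have rows x_i = −Y_{ij}·α_iᵀ, let X'_{(j)} consist of the rows with Y_{ij} = −1 and X''_{(j)} of the rows with Y_{ij} = 1. Let μ ≥ 1 and ε ∈ (0,1/2). Assume for each j that X'_{(j)} and X''_{(j)} are each μ-complex in both the ℓ₀ and ℓ₁ sense, and that ‖X'_{(j)}η‖₁ ≤ 2μ·‖X''_{(j)}η‖₁ and ‖X''_{(j)}η‖₁ ≤ 2μ·‖X'_{(j)}η‖₁ for all η ∈ ℝ². Then there exists a nonnegative weight vector w ∈ ℝ^m whose support has size at most C·(1+E)·(μ²·√m/ε²)·((log m)² + log n), such that for every j ∈ [n] and every η ∈ ℝ²: |∑_{i: Y_{ij}=−1} w_i·g_{c_i}(x_i·η)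 + ∑_{i: Y_{ij}=1} w_i·h_{c_i}(x_i·η) − F_j(η)| ≤ ε·F_j(η), where F_j(η) = ∑_{i: Y_{ij}=−1} g_{c_i}(x_i·η) + ∑_{i: Y_{ij}=1} h_{c_i}(x_i·η). -/
/-!
Complexity bounds every objective from below: `ℓ₀`-complexity forces `F_j(η) ≳ m / μ` and
`ℓ₁`-complexity forces `F_j(η) ≳ ‖Aη‖₁ / μ²`, where `A` has the rows `α_i`, so
`m + ‖Aη‖₁ ≤ 14 μ² F_j(η)`. Each summand of `F_j` is `1`-Lipschitz in `α_i ⬝ᵥ η` and at most `2 + E`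
at `0`. Bounding `|α_i ⬝ᵥ η|` by `‖Aη‖₂ ≤ ‖Aη‖₁` times the norm of the `i`-th coordinate functional
on the column space of `A`, the relative contribution of item `i` is `O(μ² ((1 + E) / m + ‖ℓ_i‖))`.
The squared norms `‖ℓ_i‖²` add up to the rank of `A`, so by Cauchy–Schwarz these sensitivities add
up to `O(μ² (1 + E) √m)`.

Sampling items independently with probabilities proportional to the sensitivities and weighting them
by the inverse probabilities preserves each `F_j(η)` up to a factor `1 ± ε`, by a Chernoff bound and
a union bound over all `j` and a polynomially fine net of a ball of polynomial radius in the column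
space. The Lipschitz bound extends this to the ball. Beyond it one rescales, since the summands are
positively homogeneous up to an additive `2 + E`. When `m` is too small for the errors made in these
two extensions to be absorbed, the weights `w = 1` are already sparse enough.
-/

open Finset Matrix

/-- `g_c(z) = ln(1+e^z) - ln(1-c)`. -/
noncomputable def gfun (c z : ℝ) : ℝ := Real.log (1 + Real.exp z) - Real.log (1 - c)

/-- `h_c(z) = -ln(c + (1-c)/(1+e^{-z}))`. -/
noncomputable def hfun (c z : ℝ) : ℝ := -Real.log (c + (1 - c) / (1 + Real.exp (-z)))

/-- The submatrix of `x` with rows indexed by `s` is `μ`-complex in the ℓ₁ sense. -/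
def Mu1ComplexOn {N d : ℕ} (x : Fin N → Fin d → ℝ) (s : Finset (Fin N)) (μ : ℝ) : Prop :=
  ∀ η : Fin d → ℝ,
    ∑ i ∈ s.filter (fun i => 0 ≤ x i ⬝ᵥ η), x i ⬝ᵥ η ≤
      μ * ∑ i ∈ s.filter (fun i => x i ⬝ᵥ η < 0), |x i ⬝ᵥ η|

/-- The submatrix of `x` with rows indexed by `s` is `μ`-complex in the ℓ₀ sense. -/
def Mu0ComplexOn {N d : ℕ} (x : Fin N → Fin d → ℝ) (s : Finset (Fin N)) (μ : ℝ) : Prop :=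
  ∀ η : Fin d → ℝ, η ≠ 0 →
    ((s.filter (fun i => 0 ≤ x i ⬝ᵥ η)).card : ℝ) ≤
      μ * ((s.filter (fun i => x i ⬝ᵥ η < 0)).card : ℝ)

section PreservesSum

variable {ι : Type*} [Fintype ι] {w v v' : ι → ℝ} {ε M t : ℝ}

/-- The weights `w` reproduce the sum of `v` up to a relative error `ε`. -/
def PreservesSum (w : ι → ℝ) (ε : ℝ) (v : ι → ℝ) : Prop :=
  |∑ i, w i * v i - ∑ i, v i| ≤ ε * ∑ i, v i

lemma preservesSum_one (hε : 0 ≤ ε) (hv : 0 ≤ ∑ i, v i) : PreservesSum 1 ε v := by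
  simpa [PreservesSum] using mul_nonneg hε hv

lemma PreservesSum.mul_left (h : PreservesSum w ε v) (ht : 0 ≤ t) :
    PreservesSum w ε fun i => t * v i := by
  simp only [PreservesSum, mul_left_comm _ t, ← mul_sum, ← mul_sub, abs_mul, abs_of_nonneg ht]
  exact mul_le_mul_of_nonneg_left h ht

lemma PreservesSum.of_perturb (h : PreservesSum w ε v') (hε : 0 ≤ ε) (hw : ∀ i, |w i - 1| ≤ M)
    (hvv' : (ε + M) * ∑ i, |v i - v' i| ≤ ε * ∑ i, v i) : PreservesSum w (2 * ε) v := by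
  have hsplit : ∑ i, w i * v i - ∑ i, v i =
      (∑ i, w i * v' i - ∑ i, v' i) + ∑ i, (w i - 1) * (v i - v' i) := by
    simp only [← sum_sub_distrib, ← sum_add_distrib]
    exact sum_congr rfl fun i _ => by ring
  have hdev : |∑ i, (w i - 1) * (v i - v' i)| ≤ M * ∑ i, |v i - v' i| := by
    rw [mul_sum]
    refine (abs_sum_le_sum_abs _ _).trans (sum_le_sum fun i _ => ?_)
    rw [abs_mul]
    exact mul_le_mul_of_nonneg_right (hw i) (abs_nonneg _)
  have hsum : ∑ i, v' i ≤ ∑ i, v i + ∑ i, |v i - v' i| := by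
    rw [← sum_add_distrib]
    exact sum_le_sum fun i _ => by linarith [neg_abs_le (v i - v' i)]
  calc |∑ i, w i * v i - ∑ i, v i|
      ≤ ε * ∑ i, v' i + M * ∑ i, |v i - v' i| := by
        rw [hsplit]
        exact (abs_add_le _ _).trans (add_le_add h hdev)
    _ ≤ ε * (∑ i, v i + ∑ i, |v i - v' i|) + M * ∑ i, |v i - v' i| := by gcongr
    _ ≤ 2 * ε * ∑ i, v i := by linarith

lemma PreservesSum.of_tail_lt_one {Λ : ℝ} (hε : 0 < ε) (hΛ : 0 < Λ) (hF : 0 < ∑ i, v i)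
    (h : Real.exp (-(ε ^ 2 * Λ / 2)) *
      Real.exp (ε / 2 / ((∑ i, v i) / Λ) * |∑ i, w i * v i - ∑ i, v i|) < 1) :
    PreservesSum w ε v := by
  rw [← Real.exp_add, Real.exp_lt_one_iff] at h
  rw [PreservesSum]
  by_contra! hlarge
  have : ε / 2 / ((∑ i, v i) / Λ) * (ε * ∑ i, v i) = ε ^ 2 * Λ / 2 := by
    field_simp
  have := mul_le_mul_of_nonneg_left hlarge.le
    (show 0 ≤ ε / 2 / ((∑ i, v i) / Λ) by positivity)
  linarith

end PreservesSum

section Sampling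

variable {ι κ : Type*} [Fintype ι] [DecidableEq ι]

/-- The probability that a random subset of `ι`, containing each `i` independently with probability
`p i`, equals `S`. Expectations over this random subset are written as sums over all `S`. -/
def bernoulliWeight (p : ι → ℝ) (S : Finset ι) : ℝ :=
  (∏ i ∈ S, p i) * ∏ i ∈ Sᶜ, (1 - p i)

/-- The Horvitz–Thompson weights of a sample `S` drawn with inclusion probabilities `p`: sampled
items get weight `1 / p i`, which makes `∑ i, inverseProbWeight p S i * f i` an unbiased estimator
of `∑ i, f i`. -/
noncomputable def inverseProbWeight (p : ι → ℝ) (S : Finset ι) (i : ι) : ℝ :=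
  if i ∈ S then (p i)⁻¹ else 0

lemma bernoulliWeight_nonneg {p : ι → ℝ} (hp0 : ∀ i, 0 ≤ p i) (hp1 : ∀ i, p i ≤ 1)
    (S : Finset ι) : 0 ≤ bernoulliWeight p S :=
  mul_nonneg (prod_nonneg fun i _ => hp0 i) (prod_nonneg fun i _ => sub_nonneg.2 (hp1 i))

lemma sum_bernoulliWeight_mul_prod (p u v : ι → ℝ) :
    ∑ S, bernoulliWeight p S * ∏ i, (if i ∈ S then u i else v i) =
      ∏ i, (p i * u i + (1 - p i) * v i) := by
  rw [prod_add, powerset_univ]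
  refine sum_congr rfl fun S _ => ?_
  rw [bernoulliWeight, ← compl_eq_univ_sdiff, prod_mul_distrib, prod_mul_distrib, prod_ite,
    filter_mem_eq_inter, univ_inter, filter_notMem_eq_sdiff, ← compl_eq_univ_sdiff]
  ring

lemma sum_bernoulliWeight (p : ι → ℝ) : ∑ S, bernoulliWeight p S = 1 := by
  simpa using sum_bernoulliWeight_mul_prod p 1 1

lemma exists_lt_one_of_sum_bernoulliWeight_mul_lt_one {p : ι → ℝ} (hp0 : ∀ i, 0 ≤ p i)
    (hp1 : ∀ i, p i ≤ 1) {X : Finset ι → ℝ} (hX : ∑ S, bernoulliWeight p S * X S < 1) :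
    ∃ S, X S < 1 := by
  rw [← sum_bernoulliWeight p] at hX
  obtain ⟨S, -, hS⟩ := exists_lt_of_sum_lt hX
  have hpos := bernoulliWeight_nonneg hp0 hp1 S
  exact ⟨S, by by_contra! h; exact hS.not_ge (le_mul_of_one_le_right hpos h)⟩

lemma sum_bernoulliWeight_mul_two_pow_card_le {p : ι → ℝ} (hp0 : ∀ i, 0 ≤ p i) :
    ∑ S, bernoulliWeight p S * 2 ^ #S ≤ Real.exp (∑ i, p i) := by
  have h := sum_bernoulliWeight_mul_prod p (fun _ => 2) (fun _ => 1)
  simp only [prod_ite_mem_eq, prod_const] at h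
  rw [h, Real.exp_sum]
  refine prod_le_prod (fun i _ => ?_) fun i _ => ?_
  · linarith [hp0 i]
  · linarith [Real.add_one_le_exp (p i)]

lemma centered_bernoulli_mgf_le {p y : ℝ} (hp : 0 ≤ p) (hy : |y| ≤ 1) :
    p * Real.exp (y - p * y) + (1 - p) * Real.exp (-(p * y)) ≤ Real.exp (p * y ^ 2) := by
  have hexp : Real.exp y ≤ 1 + y + y ^ 2 := by
    linarith [(abs_le.1 (Real.abs_exp_sub_one_sub_id_le hy)).2]
  calc p * Real.exp (y - p * y) + (1 - p) * Real.exp (-(p * y))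
      = (1 + p * (Real.exp y - 1)) * Real.exp (-(p * y)) := by
        rw [sub_eq_add_neg, Real.exp_add]; ring
    _ ≤ (p * (y + y ^ 2) + 1) * Real.exp (-(p * y)) := by
        refine mul_le_mul_of_nonneg_right ?_ (Real.exp_pos _).le
        nlinarith
    _ ≤ Real.exp (p * (y + y ^ 2)) * Real.exp (-(p * y)) := by
        gcongr
        exact Real.add_one_le_exp _
    _ = Real.exp (p * y ^ 2) := by rw [← Real.exp_add]; ring_nf

/- An item with `p = 1` is always sampled and does not fluctuate, so it needs no bound on `f`. -/
lemma inverseProb_mgf_le {p f M τ : ℝ} (hp : 0 < p) (hp1 : p ≤ 1) (hf : 0 ≤ f) (hM : 0 < M)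
    (hfM : p < 1 → f ≤ p * M) (hτ : |τ| ≤ 1) :
    p * Real.exp (τ / M * (p⁻¹ * f - f)) + (1 - p) * Real.exp (τ / M * (0 * f - f)) ≤
      Real.exp (τ ^ 2 / M * f) := by
  rcases hp1.eq_or_lt with rfl | hp1
  · simpa using by positivity
  have hq0 : 0 ≤ f / (p * M) := by positivity
  have hq1 : f / (p * M) ≤ 1 := (div_le_one (by positivity)).2 (hfM hp1)
  have hy : |τ * (f / (p * M))| ≤ 1 := by
    rw [abs_mul, abs_of_nonneg hq0]
    exact mul_le_one₀ hτ hq0 hq1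
  calc p * Real.exp (τ / M * (p⁻¹ * f - f)) + (1 - p) * Real.exp (τ / M * (0 * f - f))
      = p * Real.exp (τ * (f / (p * M)) - p * (τ * (f / (p * M)))) +
          (1 - p) * Real.exp (-(p * (τ * (f / (p * M))))) := by
        congr 3
        · field_simp
        · field_simp
          ring
    _ ≤ Real.exp (p * (τ * (f / (p * M))) ^ 2) := centered_bernoulli_mgf_le hp.le hy
    _ = Real.exp (τ ^ 2 / M * f * (f / (p * M))) := by
        congr 1
        field_simp
    _ ≤ Real.exp (τ ^ 2 / M * f) :=
        Real.exp_le_exp.2 (mul_le_of_le_one_right (by positivity) hq1)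

section Estimator

variable {p f : ι → ℝ} {M τ ε Λ : ℝ}

lemma sum_bernoulliWeight_mul_exp_le (hp : ∀ i, 0 < p i) (hp1 : ∀ i, p i ≤ 1)
    (hf : ∀ i, 0 ≤ f i) (hM : 0 < M) (hfM : ∀ i, p i < 1 → f i ≤ p i * M) (hτ : |τ| ≤ 1) :
    ∑ S, bernoulliWeight p S *
        Real.exp (τ / M * (∑ i, inverseProbWeight p S i * f i - ∑ i, f i)) ≤
      Real.exp (τ ^ 2 / M * ∑ i, f i) := by
  have hprod (S : Finset ι) :
      Real.exp (τ / M * (∑ i, inverseProbWeight p S i * f i - ∑ i, f i)) =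
        ∏ i, if i ∈ S then Real.exp (τ / M * ((p i)⁻¹ * f i - f i))
          else Real.exp (τ / M * (0 * f i - f i)) := by
    rw [← sum_sub_distrib, mul_sum, Real.exp_sum]
    exact prod_congr rfl fun i _ => by rw [inverseProbWeight]; split_ifs <;> rfl
  simp_rw [hprod, sum_bernoulliWeight_mul_prod]
  rw [mul_sum, Real.exp_sum]
  refine prod_le_prod (fun i _ => ?_) fun i _ =>
    inverseProb_mgf_le (hp i) (hp1 i) (hf i) hM (hfM i) hτ
  have := sub_nonneg.2 (hp1 i)
  have := (hp i).le
  positivity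

lemma sum_bernoulliWeight_mul_exp_abs_le (hp : ∀ i, 0 < p i) (hp1 : ∀ i, p i ≤ 1)
    (hf : ∀ i, 0 ≤ f i) (hM : 0 < M) (hfM : ∀ i, p i < 1 → f i ≤ p i * M)
    (hτ0 : 0 ≤ τ) (hτ1 : τ ≤ 1) :
    ∑ S, bernoulliWeight p S *
        Real.exp (τ / M * |∑ i, inverseProbWeight p S i * f i - ∑ i, f i|) ≤
      2 * Real.exp (τ ^ 2 / M * ∑ i, f i) := by
  have hτ : |τ| ≤ 1 := abs_le.2 ⟨by linarith, hτ1⟩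
  have hupper := sum_bernoulliWeight_mul_exp_le hp hp1 hf hM hfM hτ
  have hlower := sum_bernoulliWeight_mul_exp_le hp hp1 hf hM hfM (abs_neg τ ▸ hτ)
  rw [neg_sq] at hlower
  rw [two_mul]
  refine le_trans ?_ (add_le_add hupper hlower)
  rw [← sum_add_distrib]
  refine sum_le_sum fun S _ => ?_
  rw [← mul_add]
  refine mul_le_mul_of_nonneg_left ?_ (bernoulliWeight_nonneg (fun i => (hp i).le) hp1 S)
  rw [neg_div, neg_mul, ← abs_of_nonneg (div_nonneg hτ0 hM.le), ← abs_mul,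
    abs_of_nonneg (div_nonneg hτ0 hM.le)]
  exact Real.exp_abs_le _

/- Chernoff with `M = (∑ i, f i) / Λ` and the optimal `τ = ε / 2`. -/
lemma sum_bernoulliWeight_mul_tail_le (hp : ∀ i, 0 < p i) (hp1 : ∀ i, p i ≤ 1)
    (hε : 0 < ε) (hε1 : ε ≤ 1) (hΛ : 0 < Λ) (hf : ∀ i, 0 ≤ f i) (hF : 0 < ∑ i, f i)
    (hfp : ∀ i, p i < 1 → f i * Λ ≤ p i * ∑ i, f i) :
    ∑ S, bernoulliWeight p S * (Real.exp (-(ε ^ 2 * Λ / 2)) * Real.exp (ε / 2 / ((∑ i, f i) / Λ) *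
        |∑ i, inverseProbWeight p S i * f i - ∑ i, f i|)) ≤
      2 * Real.exp (-(ε ^ 2 * Λ / 4)) := by
  simp_rw [mul_left_comm (bernoulliWeight p _), ← mul_sum]
  calc Real.exp (-(ε ^ 2 * Λ / 2)) * ∑ S, bernoulliWeight p S *
          Real.exp (ε / 2 / ((∑ i, f i) / Λ) *
            |∑ i, inverseProbWeight p S i * f i - ∑ i, f i|)
      ≤ Real.exp (-(ε ^ 2 * Λ / 2)) *
          (2 * Real.exp ((ε / 2) ^ 2 / ((∑ i, f i) / Λ) * ∑ i, f i)) := by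
        gcongr
        refine sum_bernoulliWeight_mul_exp_abs_le hp hp1 hf (by positivity)
          (fun i hi => ?_) (by positivity) (by linarith)
        rw [← mul_div_assoc, le_div_iff₀ hΛ]
        exact hfp i hi
    _ = 2 * Real.exp (-(ε ^ 2 * Λ / 4)) := by
        rw [mul_left_comm, ← Real.exp_add]
        congr 2
        field_simp
        ring

end Estimator

lemma sum_bernoulliWeight_mul_size_le {p : ι → ℝ} (hp0 : ∀ i, 0 ≤ p i) :
    ∑ S, bernoulliWeight p S * (Real.exp (-∑ i, p i) / 4 * 2 ^ #S) ≤ 1 / 4 := by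
  simp_rw [mul_left_comm (bernoulliWeight p _), ← mul_sum]
  calc Real.exp (-∑ i, p i) / 4 * ∑ S, bernoulliWeight p S * 2 ^ #S
      ≤ Real.exp (-∑ i, p i) / 4 * Real.exp (∑ i, p i) := by
        gcongr
        exact sum_bernoulliWeight_mul_two_pow_card_le hp0
    _ = 1 / 4 := by rw [div_mul_eq_mul_div, ← Real.exp_add, neg_add_cancel, Real.exp_zero]

lemma card_le_of_size_lt_one {P : ℝ} {N : ℕ} (hP : 0 ≤ P)
    (h : Real.exp (-P) / 4 * 2 ^ N < 1) : (N : ℝ) ≤ 2 * P + 2 := by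
  have hpow : (2 : ℝ) ^ N < 4 * Real.exp P := by
    rw [Real.exp_neg, div_mul_eq_mul_div, inv_mul_eq_div, div_div, div_lt_one (by positivity)] at h
    linarith
  have hlog := Real.log_lt_log (by positivity) hpow
  rw [Real.log_pow, Real.log_mul (by norm_num) (Real.exp_pos _).ne', Real.log_exp,
    show (4 : ℝ) = 2 ^ 2 by norm_num, Real.log_pow] at hlog
  push_cast at hlog
  nlinarith [Real.log_two_gt_d9]

/- Union bound: the functional `X` below has expectation less than `1`, and each of its summands
controls one of the required properties. -/
theorem exists_sample_preservesSum {p : ι → ℝ} (hp : ∀ i, 0 < p i) (hp1 : ∀ i, p i ≤ 1)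
    {T : Finset κ} {f : κ → ι → ℝ} {ε Λ : ℝ} (hε : 0 < ε) (hε1 : ε ≤ 1) (hΛ : 0 < Λ)
    (hf : ∀ e ∈ T, ∀ i, 0 ≤ f e i) (hF : ∀ e ∈ T, 0 < ∑ i, f e i)
    (hfp : ∀ e ∈ T, ∀ i, p i < 1 → f e i * Λ ≤ p i * ∑ i, f e i)
    (hT : 8 * (#T : ℝ) ≤ Real.exp (ε ^ 2 * Λ / 4)) :
    ∃ S : Finset ι, (#S : ℝ) ≤ 2 * ∑ i, p i + 2 ∧
      ∀ e ∈ T, PreservesSum (inverseProbWeight p S) ε (f e) := by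
  have hp0 (i : ι) : 0 ≤ p i := (hp i).le
  set size : Finset ι → ℝ := fun S => Real.exp (-∑ i, p i) / 4 * 2 ^ #S
  set tail : κ → Finset ι → ℝ := fun e S => Real.exp (-(ε ^ 2 * Λ / 2)) *
    Real.exp (ε / 2 / ((∑ i, f e i) / Λ) * |∑ i, inverseProbWeight p S i * f e i - ∑ i, f e i|)
  have hsize0 (S : Finset ι) : 0 ≤ size S := by positivity
  have htail0 (e : κ) (S : Finset ι) : 0 ≤ tail e S := by positivity
  have hsize : ∑ S, bernoulliWeight p S * size S ≤ 1 / 4 := sum_bernoulliWeight_mul_size_le hp0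
  have htails : ∑ e ∈ T, ∑ S, bernoulliWeight p S * tail e S ≤ 1 / 4 := by
    calc ∑ e ∈ T, ∑ S, bernoulliWeight p S * tail e S
        ≤ #T • (2 * Real.exp (-(ε ^ 2 * Λ / 4))) := sum_le_card_nsmul T _ _ fun e he =>
          sum_bernoulliWeight_mul_tail_le hp hp1 hε hε1 hΛ (hf e he) (hF e he) (hfp e he)
      _ ≤ 1 / 4 := by
        rw [nsmul_eq_mul, Real.exp_neg, ← div_eq_mul_inv, ← mul_div_assoc,
          div_le_iff₀ (Real.exp_pos _)]
        linarith
  obtain ⟨S, hS⟩ := exists_lt_one_of_sum_bernoulliWeight_mul_lt_one hp0 hp1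
    (X := fun S => size S + ∑ e ∈ T, tail e S) (by
      simp_rw [mul_add, sum_add_distrib, mul_sum]
      rw [sum_comm (s := univ)]
      linarith)
  refine ⟨S, card_le_of_size_lt_one (sum_nonneg fun i _ => hp0 i) ?_, fun e he =>
    PreservesSum.of_tail_lt_one hε hΛ (hF e he) ?_⟩
  · change size S < 1
    linarith [sum_nonneg fun e (_ : e ∈ T) => htail0 e S]
  · change tail e S < 1
    linarith [single_le_sum (fun e _ => htail0 e S) he, hsize0 S]

end Sampling

section TameLoss

/-- A nonnegative `1`-Lipschitz loss on `ℝ` that is positively homogeneous up to the constant `B`: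
it can be discretized at small scales by the Lipschitz bound and at large scales by rescaling. -/
structure IsTameLoss (B : ℝ) (φ : ℝ → ℝ) : Prop where
  nonneg : ∀ z, 0 ≤ φ z
  lipschitz : LipschitzWith 1 φ
  apply_zero_le : φ 0 ≤ B
  abs_apply_mul_sub_le : ∀ t z, 1 ≤ t → |φ (t * z) - t * φ z| ≤ t * B

namespace IsTameLoss

variable {B B' : ℝ} {φ ψ : ℝ → ℝ}

lemma mono (hφ : IsTameLoss B φ) (hB : B ≤ B') : IsTameLoss B' φ where
  nonneg := hφ.nonneg
  lipschitz := hφ.lipschitz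
  apply_zero_le := hφ.apply_zero_le.trans hB
  abs_apply_mul_sub_le t z ht := (hφ.abs_apply_mul_sub_le t z ht).trans (by gcongr)

lemma abs_sub_le (hφ : IsTameLoss B φ) (z z' : ℝ) : |φ z - φ z'| ≤ |z - z'| := by
  simpa [Real.dist_eq] using hφ.lipschitz.dist_le_mul z z'

lemma apply_le (hφ : IsTameLoss B φ) (z : ℝ) : φ z ≤ B + |z| := by
  have hz := (abs_le.1 (hφ.abs_sub_le z 0)).2
  rw [sub_zero] at hz
  linarith [hφ.apply_zero_le]

lemma of_homogeneous_approx (hφ0 : ∀ z, 0 ≤ φ z) (hφ : LipschitzWith 1 φ)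
    (hψ : ∀ t z, 0 ≤ t → ψ (t * z) = t * ψ z) (hle : ∀ z, ψ z ≤ φ z)
    (hge : ∀ z, φ z ≤ ψ z + B) : IsTameLoss B φ where
  nonneg := hφ0
  lipschitz := hφ
  apply_zero_le := by
    have hψ0 : ψ 0 = 0 := by simpa using hψ 0 0 le_rfl
    linarith [hge 0]
  abs_apply_mul_sub_le t z ht := by
    have hle_t := hle (t * z)
    have hge_t := hge (t * z)
    rw [hψ t z (by linarith)] at hle_t hge_t
    rw [abs_le]
    constructor <;> nlinarith [hle z, hge z]

end IsTameLoss

end TameLoss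

section Coreset

lemma inverseProbWeight_nonneg {ι : Type*} [DecidableEq ι] {p : ι → ℝ} {i : ι} (hp : 0 ≤ p i)
    (S : Finset ι) : 0 ≤ inverseProbWeight p S i := by
  unfold inverseProbWeight
  split_ifs <;> positivity

lemma card_inverseProbWeight_ne_zero_le {ι : Type*} [Fintype ι] [DecidableEq ι] (p : ι → ℝ)
    (S : Finset ι) : #{i | inverseProbWeight p S i ≠ 0} ≤ #S :=
  card_le_card fun i hi => by
    by_contra h
    simp [inverseProbWeight, h] at hi

lemma abs_inverseProbWeight_sub_one_le {ι : Type*} [DecidableEq ι] {p : ι → ℝ} {i : ι} {M : ℝ}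
    (hM : 1 ≤ M) (hp : M⁻¹ ≤ p i) (hp1 : p i ≤ 1) (S : Finset ι) :
    |inverseProbWeight p S i - 1| ≤ M := by
  have hpos : 0 < p i := (inv_pos.2 (by linarith)).trans_le hp
  unfold inverseProbWeight
  split_ifs
  · have h1 := (one_le_inv₀ hpos).2 hp1
    have hpM := inv_le_of_inv_le₀ (by linarith) hp
    exact abs_le.2 ⟨by linarith, by linarith⟩
  · simpa using hM

variable {ι J V : Type*} [Fintype ι] [SeminormedAddCommGroup V] [NormedSpace ℝ V]
  {ℓ : ι → V →L[ℝ] ℝ} {φ : J → ι → ℝ → ℝ} {B L k ε δ R : ℝ}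

/-- Inclusion probabilities proportional to `B / card ι + ‖ℓ i‖`, which bounds the share that item
`i` can have in a sum of tame losses `∑ i, φ i (ℓ i y)` of size at least `card ι + ‖y‖`. The summand
`B / card ι` keeps the inverse probabilities at most `card ι`. -/
noncomputable def samplingProb (ℓ : ι → V →L[ℝ] ℝ) (B k : ℝ) (i : ι) : ℝ :=
  min 1 (k * (B / Fintype.card ι + ‖ℓ i‖))

lemma samplingProb_le_one (i : ι) : samplingProb ℓ B k i ≤ 1 := min_le_left _ _

lemma sum_samplingProb_le [Nonempty ι] :
    ∑ i, samplingProb ℓ B k i ≤ k * (B + ∑ i, ‖ℓ i‖) := by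
  calc ∑ i, samplingProb ℓ B k i ≤ ∑ i, k * (B / Fintype.card ι + ‖ℓ i‖) :=
        sum_le_sum fun i _ => min_le_right _ _
    _ = k * (B + ∑ i, ‖ℓ i‖) := by
        rw [← mul_sum, sum_add_distrib, sum_const, card_univ, nsmul_eq_mul,
          mul_div_cancel₀ _ (Nat.cast_ne_zero.2 Fintype.card_ne_zero)]

lemma inv_card_le_samplingProb [Nonempty ι] (hB : 1 ≤ B) (hk : 1 ≤ k) (i : ι) :
    (Fintype.card ι : ℝ)⁻¹ ≤ samplingProb ℓ B k i := by
  have hcard : (1 : ℝ) ≤ Fintype.card ι := Nat.one_le_cast.2 Fintype.card_pos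
  refine le_min (inv_le_one_of_one_le₀ hcard) ?_
  calc (Fintype.card ι : ℝ)⁻¹ ≤ B / Fintype.card ι := by
        rw [← one_div]
        gcongr
    _ ≤ B / Fintype.card ι + ‖ℓ i‖ := le_add_of_nonneg_right (norm_nonneg _)
    _ ≤ k * (B / Fintype.card ι + ‖ℓ i‖) := le_mul_of_one_le_left (by positivity) hk

lemma IsTameLoss.apply_clm_le [Nonempty ι] {ψ : ℝ → ℝ} (hψ : IsTameLoss B ψ) (hB : 0 ≤ B)
    (i : ι) (y : V) :
    ψ (ℓ i y) ≤ (B / Fintype.card ι + ‖ℓ i‖) * (Fintype.card ι + ‖y‖) := by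
  have hcard : (Fintype.card ι : ℝ) ≠ 0 := Nat.cast_ne_zero.2 Fintype.card_ne_zero
  calc ψ (ℓ i y) ≤ B + ‖ℓ i‖ * ‖y‖ :=
        (hψ.apply_le _).trans (add_le_add_right ((ℓ i).le_opNorm y) _)
    _ ≤ B + ‖ℓ i‖ * ‖y‖ + (B / Fintype.card ι * ‖y‖ + ‖ℓ i‖ * Fintype.card ι) :=
        le_add_of_nonneg_right (by positivity)
    _ = (B / Fintype.card ι + ‖ℓ i‖) * (Fintype.card ι + ‖y‖) := by
        field_simp
        ring

section Fixed

variable {w : ι → ℝ} {ψ : ι → ℝ → ℝ} [Nonempty ι]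

lemma PreservesSum.of_dist_le {y y' : V} (hψ : ∀ i, IsTameLoss B (ψ i)) (hL : 0 < L)
    (hF : Fintype.card ι + ‖y‖ ≤ L * ∑ i, ψ i (ℓ i y)) (hε : 0 < ε) (hε1 : ε ≤ 1)
    (hw : ∀ i, |w i - 1| ≤ Fintype.card ι) (hyy' : ‖y - y'‖ ≤ δ)
    (hδ : 2 * L * (∑ i, ‖ℓ i‖) * δ ≤ ε)
    (h : PreservesSum w ε fun i => ψ i (ℓ i y')) :
    PreservesSum w (2 * ε) fun i => ψ i (ℓ i y) := by
  have hcard : (1 : ℝ) ≤ Fintype.card ι := Nat.one_le_cast.2 Fintype.card_pos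
  have hround : ∑ i, |ψ i (ℓ i y) - ψ i (ℓ i y')| ≤ (∑ i, ‖ℓ i‖) * δ := by
    rw [sum_mul]
    refine sum_le_sum fun i _ => ((hψ i).abs_sub_le _ _).trans ?_
    rw [← map_sub]
    exact (ℓ i).le_of_opNorm_le_of_le le_rfl hyy'
  refine h.of_perturb hε.le hw (le_of_mul_le_mul_left ?_ hL)
  calc L * ((ε + Fintype.card ι) * ∑ i, |ψ i (ℓ i y) - ψ i (ℓ i y')|)
      ≤ L * ((Fintype.card ι + Fintype.card ι) * ((∑ i, ‖ℓ i‖) * δ)) := by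
        gcongr
        exact hε1.trans hcard
    _ = Fintype.card ι * (2 * L * (∑ i, ‖ℓ i‖) * δ) := by ring
    _ ≤ Fintype.card ι * ε := by gcongr
    _ ≤ L * (ε * ∑ i, ψ i (ℓ i y)) := by nlinarith [norm_nonneg y]

lemma PreservesSum.of_closedBall (hψ : ∀ i, IsTameLoss B (ψ i)) (hL : 0 < L)
    (hF : ∀ y, Fintype.card ι + ‖y‖ ≤ L * ∑ i, ψ i (ℓ i y)) (hε : 0 < ε) (hε1 : ε ≤ 1)
    (hw : ∀ i, |w i - 1| ≤ Fintype.card ι) (hR : 0 < R)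
    (hBR : 2 * L * B * (Fintype.card ι : ℝ) ^ 2 ≤ ε * R)
    (h : ∀ y, ‖y‖ ≤ R → PreservesSum w ε fun i => ψ i (ℓ i y)) (y : V) :
    PreservesSum w (2 * ε) fun i => ψ i (ℓ i y) := by
  have hcard : (1 : ℝ) ≤ Fintype.card ι := Nat.one_le_cast.2 Fintype.card_pos
  rcases le_or_gt ‖y‖ R with hy | hy
  · refine (h y hy).trans (mul_le_mul_of_nonneg_right (by linarith) ?_)
    exact sum_nonneg fun i _ => (hψ i).nonneg _
  set t : ℝ := ‖y‖ / R with ht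
  have ht1 : 1 ≤ t := (one_le_div hR).2 hy.le
  have hnorm : ‖t⁻¹ • y‖ ≤ R := by
    rw [norm_smul, norm_inv, Real.norm_of_nonneg (by linarith), inv_mul_le_iff₀ (by linarith), ht,
      div_mul_cancel₀ _ hR.ne']
  have hscale : ∑ i, |ψ i (ℓ i y) - t * ψ i (ℓ i (t⁻¹ • y))| ≤ Fintype.card ι * (t * B) := by
    rw [← nsmul_eq_mul, ← card_univ]
    refine sum_le_card_nsmul _ _ _ fun i _ => ?_
    simpa only [← smul_eq_mul, ← map_smul, smul_inv_smul₀ (by linarith : t ≠ 0)]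
      using (hψ i).abs_apply_mul_sub_le t (ℓ i (t⁻¹ • y)) ht1
  refine ((h _ hnorm).mul_left (by linarith : 0 ≤ t)).of_perturb hε.le hw
    (le_of_mul_le_mul_left ?_ hL)
  calc L * ((ε + Fintype.card ι) * ∑ i, |ψ i (ℓ i y) - t * ψ i (ℓ i (t⁻¹ • y))|)
      ≤ L * ((Fintype.card ι + Fintype.card ι) * (Fintype.card ι * (t * B))) := by
        gcongr
        exact hε1.trans hcard
    _ = t * (2 * L * B * (Fintype.card ι : ℝ) ^ 2) := by ring
    _ ≤ t * (ε * R) := by gcongr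
    _ = ε * ‖y‖ := by
        rw [ht]
        field_simp
    _ ≤ L * (ε * ∑ i, ψ i (ℓ i y)) := by nlinarith [hF y]

end Fixed

section Simultaneous

variable [Nonempty ι] [Fintype J]

lemma exists_sample_preservesSum_on_net [DecidableEq ι] (hφ : ∀ j i, IsTameLoss B (φ j i))
    (hB : 1 ≤ B) (hL : 0 < L) (hF : ∀ j y, Fintype.card ι + ‖y‖ ≤ L * ∑ i, φ j i (ℓ i y))
    (hε : 0 < ε) (hε1 : ε ≤ 1) (hk : 1 ≤ k) {N : Finset V}
    (hN : 8 * (Fintype.card J * #N : ℝ) ≤ Real.exp (ε ^ 2 * (k / L) / 4)) :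
    ∃ S : Finset ι, (#S : ℝ) ≤ 2 * ∑ i, samplingProb ℓ B k i + 2 ∧ ∀ j, ∀ y ∈ N,
      PreservesSum (inverseProbWeight (samplingProb ℓ B k) S) ε fun i => φ j i (ℓ i y) := by
  have hcard : (0 : ℝ) < Fintype.card ι := Nat.cast_pos.2 Fintype.card_pos
  have hpos (j : J) (y : V) : 0 < ∑ i, φ j i (ℓ i y) :=
    pos_of_mul_pos_right (by linarith [hF j y, norm_nonneg y]) hL.le
  have hshare (j : J) (y : V) (i : ι) (hi : samplingProb ℓ B k i < 1) :
      φ j i (ℓ i y) * (k / L) ≤ samplingProb ℓ B k i * ∑ i, φ j i (ℓ i y) := by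
    have hmin := ((min_lt_iff.1 hi).resolve_left (lt_irrefl 1)).le
    rw [samplingProb, min_eq_right hmin, ← mul_div_assoc, div_le_iff₀ hL]
    calc φ j i (ℓ i y) * k
        ≤ (B / Fintype.card ι + ‖ℓ i‖) * (L * ∑ i, φ j i (ℓ i y)) * k := by
          gcongr
          exact ((hφ j i).apply_clm_le (by linarith) i y).trans (by gcongr; exact hF j y)
      _ = k * (B / Fintype.card ι + ‖ℓ i‖) * (∑ i, φ j i (ℓ i y)) * L := by ring
  obtain ⟨S, hcardS, hS⟩ := exists_sample_preservesSum (T := univ ×ˢ N)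
    (f := fun e i => φ e.1 i (ℓ i e.2))
    (fun i => (inv_pos.2 hcard).trans_le (inv_card_le_samplingProb hB hk i))
    samplingProb_le_one hε hε1 (div_pos (by linarith) hL)
    (fun e _ i => (hφ e.1 i).nonneg _) (fun e _ => hpos e.1 e.2)
    (fun e _ => hshare e.1 e.2) (by simpa [card_product] using hN)
  exact ⟨S, hcardS, fun j y hy => hS (j, y) (by simpa using hy)⟩

theorem exists_coreset_of_net (hφ : ∀ j i, IsTameLoss B (φ j i))
    (hB : 1 ≤ B) (hL : 0 < L) (hF : ∀ j y, Fintype.card ι + ‖y‖ ≤ L * ∑ i, φ j i (ℓ i y))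
    (hε : 0 < ε) (hε1 : ε ≤ 1) (hk : 1 ≤ k) {N : Finset V}
    (hN : 8 * (Fintype.card J * #N : ℝ) ≤ Real.exp (ε ^ 2 * k / (64 * L)))
    (hNδ : ∀ y, ‖y‖ ≤ R → ∃ y' ∈ N, ‖y - y'‖ ≤ δ) (hR : 0 < R)
    (hδ : 8 * L * (∑ i, ‖ℓ i‖) * δ ≤ ε)
    (hBR : 4 * L * B * (Fintype.card ι : ℝ) ^ 2 ≤ ε * R) :
    ∃ w : ι → ℝ, (∀ i, 0 ≤ w i) ∧ (#{i | w i ≠ 0} : ℝ) ≤ 2 * (k * (B + ∑ i, ‖ℓ i‖)) + 2 ∧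
      ∀ j y, PreservesSum w ε fun i => φ j i (ℓ i y) := by
  classical
  have hcard : (1 : ℝ) ≤ Fintype.card ι := Nat.one_le_cast.2 Fintype.card_pos
  have hinv (i : ι) := inv_card_le_samplingProb (ℓ := ℓ) hB hk i
  obtain ⟨S, hS, hSN⟩ := exists_sample_preservesSum_on_net hφ hB hL hF
    (by linarith : 0 < ε / 4) (by linarith) hk (hN.trans_eq (by congr 1; field_simp; norm_num))
  set w := inverseProbWeight (samplingProb ℓ B k) S
  have hw (i : ι) : |w i - 1| ≤ Fintype.card ι :=
    abs_inverseProbWeight_sub_one_le hcard (hinv i) (samplingProb_le_one i) S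
  have hball (j : J) (y : V) (hy : ‖y‖ ≤ R) :
      PreservesSum w (2 * (ε / 4)) fun i => φ j i (ℓ i y) := by
    obtain ⟨y', hy'N, hyy'⟩ := hNδ y hy
    exact (hSN j y' hy'N).of_dist_le (hφ j) hL (hF j y) (by linarith) (by linarith) hw hyy'
      (by linarith)
  refine ⟨w, fun i => inverseProbWeight_nonneg ((by positivity : (0 : ℝ) ≤ _).trans (hinv i)) S,
    ?_, fun j y => ?_⟩
  · have : (#{i | w i ≠ 0} : ℝ) ≤ #S := by
      exact_mod_cast card_inverseProbWeight_ne_zero_le (samplingProb ℓ B k) S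
    linarith [sum_samplingProb_le (ℓ := ℓ) (B := B) (k := k)]
  · rw [show ε = 2 * (2 * (ε / 4)) by ring]
    exact .of_closedBall (hφ j) hL (hF j) (by linarith) (by linarith) hw hR (by linarith)
      (hball j) y

end Simultaneous

end Coreset

section Euclidean

variable {V : Type*} [NormedAddCommGroup V] [InnerProductSpace ℝ V] [FiniteDimensional ℝ V]

lemma exists_grid_net (M : ℕ) {δ : ℝ} (hδ : 0 < δ) :
    ∃ N : Finset V, #N ≤ (2 * M + 1) ^ Module.finrank ℝ V ∧
      ∀ y : V, ‖y‖ ≤ M * δ → ∃ y' ∈ N, ‖y - y'‖ ≤ Module.finrank ℝ V * δ := by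
  classical
  set b := stdOrthonormalBasis ℝ V
  set gridPoint : (Fin (Module.finrank ℝ V) → ℤ) → V := fun a => ∑ k, (a k * δ) • b k
  refine ⟨(Fintype.piFinset fun _ => Icc (-M : ℤ) M).image gridPoint,
    card_image_le.trans_eq ?_, fun y hy => ?_⟩
  · rw [Fintype.card_piFinset_const, Int.card_Icc]
    congr 1
    omega
  set a : Fin (Module.finrank ℝ V) → ℤ := fun k => ⌊b.repr y k / δ⌋
  have hcoord (k) : |b.repr y k / δ| ≤ M := by
    rw [abs_div, abs_of_pos hδ, div_le_iff₀ hδ, b.repr_apply_apply]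
    refine (abs_real_inner_le_norm _ _).trans ?_
    rwa [b.norm_eq_one, one_mul]
  refine ⟨gridPoint a, mem_image_of_mem _ (Fintype.mem_piFinset.2 fun k => mem_Icc.2 ⟨?_, ?_⟩), ?_⟩
  · exact Int.le_floor.2 (by simpa using (abs_le.1 (hcoord k)).1)
  · exact Int.floor_le_iff.2 (by simpa using (abs_le.1 (hcoord k)).2.trans_lt (lt_add_one _))
  have hround (k) : |b.repr y k - a k * δ| ≤ δ := by
    have hfract : b.repr y k - a k * δ = Int.fract (b.repr y k / δ) * δ := by
      rw [Int.fract, sub_mul, div_mul_cancel₀ _ hδ.ne']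
    rw [hfract, abs_of_nonneg (mul_nonneg (Int.fract_nonneg _) hδ.le)]
    exact mul_le_of_le_one_left hδ.le (Int.fract_lt_one _).le
  calc ‖y - gridPoint a‖ = ‖∑ k, (b.repr y k - a k * δ) • b k‖ := by
        simp_rw [sub_smul, sum_sub_distrib, b.sum_repr, gridPoint]
    _ ≤ ∑ k, |b.repr y k - a k * δ| := norm_sum_le_of_le _ fun k _ => by
        rw [norm_smul, b.norm_eq_one, mul_one, Real.norm_eq_abs]
    _ ≤ Module.finrank ℝ V * δ := by
        simpa using sum_le_card_nsmul univ _ _ fun k _ => hround k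

end Euclidean

section Coordinates

variable {ι : Type*} [Fintype ι]

/-- The coordinate functionals of `EuclideanSpace ℝ ι`, restricted to a subspace. -/
noncomputable def coordFunctional (V : Submodule ℝ (EuclideanSpace ℝ ι)) (i : ι) : V →L[ℝ] ℝ :=
  (EuclideanSpace.proj i).comp V.subtypeL

variable (V : Submodule ℝ (EuclideanSpace ℝ ι))

lemma sum_norm_coordFunctional_sq : ∑ i, ‖coordFunctional V i‖ ^ 2 = Module.finrank ℝ V := by
  set b := stdOrthonormalBasis ℝ V
  calc ∑ i, ‖coordFunctional V i‖ ^ 2 = ∑ i, ∑ k, (b k : EuclideanSpace ℝ ι) i ^ 2 :=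
        sum_congr rfl fun i _ => b.norm_dual (coordFunctional V i)
    _ = ∑ k, ‖(b k : EuclideanSpace ℝ ι)‖ ^ 2 := by
        rw [sum_comm]
        exact sum_congr rfl fun k _ => (EuclideanSpace.real_norm_sq_eq _).symm
    _ = Module.finrank ℝ V := by simp [Submodule.norm_coe, b.norm_eq_one]

lemma sum_norm_coordFunctional_le :
    ∑ i, ‖coordFunctional V i‖ ≤ √(Fintype.card ι) * √(Module.finrank ℝ V) := by
  rw [← Real.sqrt_mul (Nat.cast_nonneg _), ← sum_norm_coordFunctional_sq V]
  exact Real.le_sqrt_of_sq_le sq_sum_le_card_mul_sum_sq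

end Coordinates

section SubspaceCoreset

lemma one_le_log_of_three_le {x : ℝ} (hx : 3 ≤ x) : 1 ≤ Real.log x :=
  (Real.le_log_iff_exp_le (by linarith)).2 (by linarith [Real.exp_one_lt_d9])

lemma sqrt_natCast_le_self (n : ℕ) : √(n : ℝ) ≤ n :=
  (Real.sqrt_le_left n.cast_nonneg).2 (by exact_mod_cast Nat.le_self_pow two_ne_zero n)

lemma eight_mul_grid_card_le_exp {m : ℕ} (hm : 3 ≤ m) (n r : ℕ) :
    8 * (n * ((2 * m ^ 5 + 1) ^ r : ℕ) : ℝ) ≤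
      Real.exp (6 * (r + 1) * (Real.log m + Real.log n)) := by
  have hm' : (3 : ℝ) ≤ m := by exact_mod_cast hm
  have hlogm := one_le_log_of_three_le hm'
  have hlogn := Real.log_natCast_nonneg n
  have hexp (e : ℕ) : (m : ℝ) ^ e = Real.exp (e * Real.log m) := by
    rw [← Real.log_pow, Real.exp_log (by positivity)]
  have hbase : 2 * (m : ℝ) ^ 5 + 1 ≤ m ^ 6 := by
    nlinarith [one_le_pow₀ (show (1 : ℝ) ≤ m by linarith) (n := 5)]
  calc 8 * (n * ((2 * m ^ 5 + 1) ^ r : ℕ) : ℝ)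
      ≤ (m : ℝ) ^ 2 * (Real.exp (Real.log n) * ((m : ℝ) ^ 6) ^ r) := by
        push_cast
        gcongr
        · nlinarith
        · exact Real.le_exp_log _
    _ = Real.exp (2 * Real.log m + (Real.log n + 6 * r * Real.log m)) := by
        rw [← pow_mul, hexp, hexp, ← Real.exp_add, ← Real.exp_add]
        push_cast
        rfl
    _ ≤ Real.exp (6 * (r + 1) * (Real.log m + Real.log n)) := by
        gcongr
        nlinarith [mul_nonneg r.cast_nonneg hlogn]

lemma rounding_error_le {B L m r S ε : ℝ} (hB : 1 ≤ B) (hL : 0 < L) (hm : 1 ≤ m) (hr : 0 ≤ r)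
    (hS : S ≤ √m * r) (hlarge : 8 * B * L * (r + 1) ^ 2 ≤ ε * m) :
    8 * L * S * (r * (1 / m ^ 2)) ≤ ε := by
  have hsqrt : √m ≤ m := (Real.sqrt_le_left (by linarith)).2 (by nlinarith)
  calc 8 * L * S * (r * (1 / m ^ 2))
      ≤ 8 * L * (m * (r + 1)) * ((r + 1) * (1 / m ^ 2)) := by
        gcongr
        · exact hS.trans (by gcongr; linarith)
        · linarith
    _ = 8 * 1 * L * (r + 1) ^ 2 / m := by field_simp
    _ ≤ 8 * B * L * (r + 1) ^ 2 / m := by gcongr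
    _ ≤ ε := (div_le_iff₀ (by positivity)).2 hlarge

lemma scaling_error_le {B L m r ε : ℝ} (hB : 0 ≤ B) (hL : 0 ≤ L) (hr : 0 ≤ r)
    (hlarge : 8 * B * L * (r + 1) ^ 2 ≤ ε * m) : 4 * L * B * m ^ 2 ≤ ε * m ^ 3 := by
  have hBL : 0 ≤ B * L := mul_nonneg hB hL
  have hone : 1 ≤ (r + 1) ^ 2 := one_le_pow₀ (by linarith)
  calc 4 * L * B * m ^ 2 ≤ 8 * B * L * (r + 1) ^ 2 * m ^ 2 := by
        refine mul_le_mul_of_nonneg_right ?_ (sq_nonneg m)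
        nlinarith
    _ ≤ ε * m * m ^ 2 := by gcongr
    _ = ε * m ^ 3 := by ring

lemma sample_size_le {B m r S k : ℝ} (hB : 1 ≤ B) (hm : 1 ≤ m) (hr : 0 ≤ r) (hk : 2 ≤ k)
    (hS : S ≤ √m * r) : 2 * (k * (B + S)) + 2 ≤ 3 * (k * (B * (√m * (r + 1)))) := by
  have hsqrt : 1 ≤ √m := Real.one_le_sqrt.2 hm
  have hone : 1 ≤ B * (√m * (r + 1)) :=
    one_le_mul_of_one_le_of_one_le hB (one_le_mul_of_one_le_of_one_le hsqrt (by linarith))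
  have hsum : B + S ≤ B * (√m * (r + 1)) := by
    calc B + S ≤ B * √m + B * (√m * r) :=
          add_le_add (le_mul_of_one_le_right (by linarith) hsqrt)
            (hS.trans (le_mul_of_one_le_left (by positivity) hB))
      _ = B * (√m * (r + 1)) := by ring
  nlinarith

variable {ι J : Type*} [Fintype ι] [Fintype J] {φ : J → ι → ℝ → ℝ} {B L k ε : ℝ}

/- Any fixed large powers would do for the radius `card ι ^ 3` and the mesh `(card ι)⁻¹ ^ 2`: they
enter the bound only through the logarithm of the size of the net. -/
lemma exists_coreset_subspace_of_large [Nonempty ι] (V : Submodule ℝ (EuclideanSpace ℝ ι))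
    (hφ : ∀ j i, IsTameLoss B (φ j i)) (hB : 1 ≤ B) (hL : 0 < L)
    (hF : ∀ j, ∀ y : V, Fintype.card ι + ‖y‖ ≤ L * ∑ i, φ j i (coordFunctional V i y))
    (hε : 0 < ε) (hε1 : ε ≤ 1) (hk : 2 ≤ k)
    (hnet : 8 * (Fintype.card J * ((2 * Fintype.card ι ^ 5 + 1) ^ Module.finrank ℝ V : ℕ) : ℝ) ≤
      Real.exp (ε ^ 2 * k / (64 * L)))
    (hlarge : 8 * B * L * (Module.finrank ℝ V + 1) ^ 2 ≤ ε * Fintype.card ι) :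
    ∃ w : ι → ℝ, (∀ i, 0 ≤ w i) ∧
      (#{i | w i ≠ 0} : ℝ) ≤ 3 * (k * (B * (√(Fintype.card ι) * (Module.finrank ℝ V + 1)))) ∧
      ∀ j (y : V), PreservesSum w ε fun i => φ j i (coordFunctional V i y) := by
  have hm : (1 : ℝ) ≤ Fintype.card ι := Nat.one_le_cast.2 Fintype.card_pos
  have hr : (0 : ℝ) ≤ Module.finrank ℝ V := Nat.cast_nonneg _
  have hsum : ∑ i, ‖coordFunctional V i‖ ≤ √(Fintype.card ι) * Module.finrank ℝ V :=
    (sum_norm_coordFunctional_le V).trans (by gcongr; exact sqrt_natCast_le_self _)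
  obtain ⟨N, hNcard, hN⟩ := exists_grid_net (V := V) (Fintype.card ι ^ 5)
    (δ := 1 / (Fintype.card ι : ℝ) ^ 2) (by positivity)
  have hNexp : 8 * (Fintype.card J * #N : ℝ) ≤ Real.exp (ε ^ 2 * k / (64 * L)) :=
    le_trans (by gcongr) hnet
  have hradius : ((Fintype.card ι ^ 5 : ℕ) : ℝ) * (1 / (Fintype.card ι : ℝ) ^ 2) =
      (Fintype.card ι : ℝ) ^ 3 := by
    push_cast
    field_simp
  obtain ⟨w, hw0, hwcard, hw⟩ := exists_coreset_of_net hφ hB hL hF hε hε1 (by linarith) hNexp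
    (hradius ▸ hN) (by positivity) (rounding_error_le hB hL hm hr hsum hlarge)
    (scaling_error_le (by linarith) hL.le hr hlarge)
  exact ⟨w, hw0, hwcard.trans (sample_size_le hB hm hr hk hsum), hw⟩

theorem exists_coreset_subspace (V : Submodule ℝ (EuclideanSpace ℝ ι))
    (hι : 3 ≤ Fintype.card ι) (hφ : ∀ j i, IsTameLoss B (φ j i)) (hB : 1 ≤ B) (hL : 1 ≤ L)
    (hF : ∀ j, ∀ y : V, Fintype.card ι + ‖y‖ ≤ L * ∑ i, φ j i (coordFunctional V i y))
    (hε : 0 < ε) (hε1 : ε ≤ 1) :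
    ∃ w : ι → ℝ, (∀ i, 0 ≤ w i) ∧
      (#{i | w i ≠ 0} : ℝ) ≤ 1152 * B *
        (L * (Module.finrank ℝ V + 1) ^ 2 * √(Fintype.card ι) / ε ^ 2) *
          (Real.log (Fintype.card ι) + Real.log (Fintype.card J)) ∧
      ∀ j (y : V), PreservesSum w ε fun i => φ j i (coordFunctional V i y) := by
  have : Nonempty ι := Fintype.card_pos_iff.1 (by lia)
  have hm : (3 : ℝ) ≤ Fintype.card ι := by exact_mod_cast hι
  have hsqrt : 1 ≤ √(Fintype.card ι : ℝ) := Real.one_le_sqrt.2 (by linarith)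
  have hlog : 1 ≤ Real.log (Fintype.card ι) + Real.log (Fintype.card J) :=
    le_add_of_le_of_nonneg (one_le_log_of_three_le hm) (Real.log_natCast_nonneg _)
  have hnet := eight_mul_grid_card_le_exp hι (Fintype.card J) (Module.finrank ℝ V)
  have hr : (1 : ℝ) ≤ Module.finrank ℝ V + 1 := le_add_of_nonneg_left (Nat.cast_nonneg _)
  set m : ℝ := (Fintype.card ι : ℝ)
  set r : ℝ := (Module.finrank ℝ V : ℝ)
  set lg : ℝ := Real.log m + Real.log (Fintype.card J)
  rcases le_or_gt (8 * B * L * (r + 1) ^ 2) (ε * m) with hlarge | hsmall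
  · have hk : 2 ≤ 384 * L * (r + 1) * lg / ε ^ 2 := by
      rw [le_div_iff₀ (by positivity)]
      have hprod : 1 ≤ L * (r + 1) * lg :=
        one_le_mul_of_one_le_of_one_le (one_le_mul_of_one_le_of_one_le hL hr) hlog
      linarith [pow_le_one₀ hε.le hε1 (n := 2)]
    obtain ⟨w, hw0, hwcard, hw⟩ := exists_coreset_subspace_of_large V hφ hB (by linarith) hF hε hε1
      hk (hnet.trans_eq (by congr 1; field_simp; norm_num)) hlarge
    exact ⟨w, hw0, hwcard.trans_eq (by ring), hw⟩
  · refine ⟨1, fun _ => zero_le_one, ?_, fun j y => preservesSum_one hε.le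
      (sum_nonneg fun i _ => (hφ j i).nonneg _)⟩
    calc (#{i : ι | (1 : ι → ℝ) i ≠ 0} : ℝ) = m := by simp [m]
      _ ≤ 8 * (B * L * (r + 1) ^ 2) / ε := by
          rw [le_div_iff₀ hε]
          linarith
      _ ≤ 1152 * (B * L * (r + 1) ^ 2) * (√m * lg) / ε ^ 2 := by
          have hε2 : ε ^ 2 ≤ ε := pow_le_of_le_one hε.le hε1 two_ne_zero
          have hX : 0 ≤ B * L * (r + 1) ^ 2 := by positivity
          refine div_le_div₀ (by positivity) ?_ (by positivity) hε2
          nlinarith [one_le_mul_of_one_le_of_one_le hsqrt hlog]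
      _ = 1152 * B * (L * (r + 1) ^ 2 * √m / ε ^ 2) * lg := by ring

end SubspaceCoreset

section MatrixCoreset

variable {ι κ : Type*} [Fintype κ]

/-- The column space of the matrix `A`, with the Euclidean norm. -/
noncomputable def columnSpace (A : Matrix ι κ ℝ) : Submodule ℝ (EuclideanSpace ℝ ι) :=
  LinearMap.range ((WithLp.linearEquiv 2 ℝ (ι → ℝ)).symm.toLinearMap ∘ₗ A.mulVecLin)

lemma finrank_columnSpace_le (A : Matrix ι κ ℝ) :
    Module.finrank ℝ (columnSpace A) ≤ Fintype.card κ :=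
  (LinearMap.finrank_range_le _).trans_eq (Module.finrank_fintype_fun_eq_card ℝ)

variable [Fintype ι]

lemma euclideanNorm_le_sum_abs (v : ι → ℝ) : ‖WithLp.toLp 2 v‖ ≤ ∑ i, |v i| := by
  rw [EuclideanSpace.norm_eq]
  refine Real.sqrt_le_iff.2 ⟨sum_nonneg fun i _ => abs_nonneg _, ?_⟩
  exact sum_sq_le_sq_sum_of_nonneg fun i _ => abs_nonneg _

theorem exists_coreset_matrix {J : Type*} [Fintype J] {φ : J → ι → ℝ → ℝ} {B L ε : ℝ}
    (A : Matrix ι κ ℝ) (hι : 3 ≤ Fintype.card ι)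
    (hφ : ∀ j i, IsTameLoss B (φ j i)) (hB : 1 ≤ B) (hL : 1 ≤ L)
    (hF : ∀ j η, Fintype.card ι + ∑ i, |A i ⬝ᵥ η| ≤ L * ∑ i, φ j i (A i ⬝ᵥ η))
    (hε : 0 < ε) (hε1 : ε ≤ 1) :
    ∃ w : ι → ℝ, (∀ i, 0 ≤ w i) ∧
      (#{i | w i ≠ 0} : ℝ) ≤ 1152 * B *
        (L * (Fintype.card κ + 1) ^ 2 * √(Fintype.card ι) / ε ^ 2) *
          (Real.log (Fintype.card ι) + Real.log (Fintype.card J)) ∧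
      ∀ j η, PreservesSum w ε fun i => φ j i (A i ⬝ᵥ η) := by
  have hFV (j : J) (y : columnSpace A) :
      Fintype.card ι + ‖y‖ ≤ L * ∑ i, φ j i (coordFunctional (columnSpace A) i y) := by
    obtain ⟨_, η, rfl⟩ := y
    exact (add_le_add_right (euclideanNorm_le_sum_abs (A *ᵥ η)) _).trans (hF j η)
  obtain ⟨w, hw0, hwcard, hw⟩ := exists_coreset_subspace (columnSpace A) hι hφ hB hL hFV hε hε1
  refine ⟨w, hw0, hwcard.trans ?_, fun j η => hw j ⟨_, η, rfl⟩⟩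
  gcongr
  exact finrank_columnSpace_le A

end MatrixCoreset

section IRTLoss

lemma lipschitzWith_one_of_monotone {f : ℝ → ℝ} (hf : Monotone f)
    (hf' : Monotone fun z => z - f z) : LipschitzWith 1 f := by
  refine LipschitzWith.of_le_add fun x y => ?_
  rw [Real.dist_eq]
  rcases le_total x y with hxy | hxy
  · linarith [hf hxy, abs_nonneg (x - y)]
  · linarith [hf' hxy, le_abs_self (x - y)]

lemma monotone_log_one_add_mul_exp {c : ℝ} (hc : 0 ≤ c) :
    Monotone fun z => Real.log (1 + c * Real.exp z) := fun _ _ h =>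
  Real.log_le_log (by positivity) (by gcongr)

lemma log_one_add_exp_eq_add (z : ℝ) :
    Real.log (1 + Real.exp z) = z + Real.log (1 + Real.exp (-z)) := by
  rw [show 1 + Real.exp z = Real.exp z * (1 + Real.exp (-z)) by
      rw [mul_add, ← Real.exp_add, add_neg_cancel, Real.exp_zero, mul_one, add_comm],
    Real.log_mul (Real.exp_pos _).ne' (by positivity), Real.log_exp]

lemma monotone_sub_log_one_add_exp : Monotone fun z => z - Real.log (1 + Real.exp z) :=
  fun x y h => by
    have := monotone_log_one_add_mul_exp zero_le_one (neg_le_neg h)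
    simp only [one_mul] at this
    simp only [log_one_add_exp_eq_add x, log_one_add_exp_eq_add y]
    linarith

lemma log_one_add_exp_le (z : ℝ) : Real.log (1 + Real.exp z) ≤ max z 0 + Real.log 2 := by
  have h0 : ∀ x ≤ 0, Real.log (1 + Real.exp x) ≤ Real.log 2 := fun x hx =>
    Real.log_le_log (by positivity) (by linarith [Real.exp_le_one_iff.2 hx])
  rcases le_total z 0 with hz | hz
  · simpa [hz] using h0 z hz
  · rw [log_one_add_exp_eq_add, max_eq_left hz]
    linarith [h0 (-z) (by linarith)]

variable {c z : ℝ}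

lemma max_zero_le_gfun (hc : 0 ≤ c) (hc1 : c ≤ 1) (z : ℝ) : max z 0 ≤ gfun c z := by
  have hlog : Real.log (1 - c) ≤ 0 := Real.log_nonpos (by linarith) (by linarith)
  have h0 : 0 ≤ Real.log (1 + Real.exp (-z)) :=
    Real.log_nonneg (by linarith [Real.exp_pos (-z)])
  have h1 : 0 ≤ Real.log (1 + Real.exp z) := Real.log_nonneg (by linarith [Real.exp_pos z])
  rw [gfun]
  exact max_le (by linarith [log_one_add_exp_eq_add z]) (by linarith)

lemma gfun_le (hc : c ≤ 1 / 2) (z : ℝ) : gfun c z ≤ max z 0 + 2 := by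
  have hlog : -Real.log 2 ≤ Real.log (1 - c) := by
    rw [← Real.log_inv]
    exact Real.log_le_log (by norm_num) (by linarith)
  rw [gfun]
  linarith [log_one_add_exp_le z, Real.log_two_lt_d9]

lemma one_fourth_le_gfun (hc : 0 ≤ c) (hc1 : c ≤ 1) (hz : 0 ≤ z) : 1 / 4 ≤ gfun c z := by
  have hlog : Real.log (1 - c) ≤ 0 := Real.log_nonpos (by linarith) (by linarith)
  have hlog2 : Real.log 2 ≤ Real.log (1 + Real.exp z) :=
    Real.log_le_log (by norm_num) (by linarith [Real.one_le_exp hz])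
  rw [gfun]
  linarith [Real.log_two_gt_d9]

lemma isTameLoss_gfun (hc : 0 ≤ c) (hc1 : c ≤ 1 / 2) : IsTameLoss 2 (gfun c) := by
  have hge := max_zero_le_gfun hc (by linarith : c ≤ 1)
  refine .of_homogeneous_approx (ψ := fun z => max z 0)
    (fun z => (le_max_right _ _).trans (hge z)) (lipschitzWith_one_of_monotone ?_ ?_)
    (fun t z ht => by rw [mul_max_of_nonneg _ _ ht, mul_zero]) hge (gfun_le hc1)
  · exact fun x y h => by simpa [gfun] using monotone_log_one_add_mul_exp zero_le_one h
  · exact fun x y h => by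
      have := monotone_sub_log_one_add_exp h
      simp only [gfun] at this ⊢
      linarith

lemma hfun_neg_eq (hc : 0 ≤ c) (z : ℝ) :
    hfun c (-z) = Real.log (1 + Real.exp z) - Real.log (1 + c * Real.exp z) := by
  have hfrac : c + (1 - c) / (1 + Real.exp z) = (1 + c * Real.exp z) / (1 + Real.exp z) := by
    field_simp
    ring
  rw [hfun, neg_neg, hfrac, Real.log_div (by positivity) (by positivity), neg_sub]

lemma hfun_nonneg (hc : 0 ≤ c) (hc1 : c ≤ 1) (z : ℝ) : 0 ≤ hfun c z := by
  rw [← neg_neg z, hfun_neg_eq hc, sub_nonneg]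
  exact Real.log_le_log (by positivity)
    (by linarith [mul_le_of_le_one_left (Real.exp_pos (-z)).le hc1])

lemma hfun_le_log_one_div (hc : 0 < c) (hc1 : c ≤ 1) (z : ℝ) : hfun c z ≤ Real.log (1 / c) := by
  have : 0 ≤ (1 - c) / (1 + Real.exp (-z)) := div_nonneg (by linarith) (by positivity)
  rw [one_div, Real.log_inv, hfun, neg_le_neg_iff]
  exact Real.log_le_log hc (by linarith)

lemma one_fourth_le_hfun (hc : 0 ≤ c) (hc1 : c ≤ 1 / 2) (hz : z ≤ 0) : 1 / 4 ≤ hfun c z := by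
  have hpos : 0 < (1 - c) / (1 + Real.exp (-z)) := div_pos (by linarith) (by positivity)
  have hle : (1 - c) / (1 + Real.exp (-z)) ≤ (1 - c) / 2 :=
    div_le_div_of_nonneg_left (by linarith) two_pos
      (by linarith [Real.one_le_exp (neg_nonneg.2 hz)])
  have hlog := Real.log_le_sub_one_of_pos (add_pos_of_nonneg_of_pos hc hpos)
  rw [hfun]
  linarith

lemma isTameLoss_hfun_neg (hc : 0 < c) (hc1 : c ≤ 1) :
    IsTameLoss (Real.log (1 / c)) fun z => hfun c (-z) := by
  refine .of_homogeneous_approx (ψ := 0) (fun z => hfun_nonneg hc.le hc1 _)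
    (lipschitzWith_one_of_monotone ?_ ?_) (by simp) (fun z => hfun_nonneg hc.le hc1 _)
    (fun z => by simpa using hfun_le_log_one_div hc hc1 (-z))
  · intro x y h
    have hexp := Real.exp_le_exp.2 h
    simp only [hfun_neg_eq hc.le, ← Real.log_div (show 1 + Real.exp _ ≠ 0 by positivity)
      (show 1 + c * Real.exp _ ≠ 0 by positivity)]
    refine Real.log_le_log (by positivity) ?_
    rw [div_le_div_iff₀ (by positivity) (by positivity)]
    nlinarith
  · intro x y h
    have h1 := monotone_sub_log_one_add_exp h
    have h2 := monotone_log_one_add_mul_exp hc.le h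
    simp only [hfun_neg_eq hc.le] at h1 h2 ⊢
    linarith

/-- The loss of an item with guessing parameter `c` answered with `y ∈ {-1, 1}`, as a function of
`z = α ⬝ᵥ η`. Since the rows of the data matrix are `-y • α`, the argument of `hfun` is `-z`. -/
noncomputable def irtLoss (c y z : ℝ) : ℝ :=
  if y = -1 then gfun c z else hfun c (-z)

lemma isTameLoss_irtLoss {E : ℝ} (hc : 0 < c) (hc1 : c ≤ 1 / 2) (hE : Real.log (1 / c) ≤ E)
    (y : ℝ) : IsTameLoss (2 + E) (irtLoss c y) := by
  have hlog : 0 ≤ Real.log (1 / c) := Real.log_nonneg (one_le_one_div hc (by linarith))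
  unfold irtLoss
  split_ifs
  · exact (isTameLoss_gfun hc.le hc1).mono (by linarith)
  · exact (isTameLoss_hfun_neg hc (by linarith)).mono (by linarith)

end IRTLoss

section Complexity

variable {N d : ℕ} {x : Fin N → Fin d → ℝ} {s t : Finset (Fin N)} {μ : ℝ}

lemma Mu0ComplexOn.card_le (h : Mu0ComplexOn x s μ) (hμ : 1 ≤ μ) (η : Fin d → ℝ) :
    (#s : ℝ) ≤ 2 * μ * #{i ∈ s | x i ⬝ᵥ η ≤ 0} := by
  rcases eq_or_ne η 0 with rfl | hη
  · simp only [dotProduct_zero, le_refl, filter_true]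
    exact le_mul_of_one_le_left (Nat.cast_nonneg _) (by linarith)
  · have hsplit : (#s : ℝ) = #{i ∈ s | x i ⬝ᵥ η < 0} + #{i ∈ s | 0 ≤ x i ⬝ᵥ η} := by
      have := card_filter_add_card_filter_not (s := s) fun i => x i ⬝ᵥ η < 0
      simp only [not_lt] at this
      exact_mod_cast this.symm
    have hle : (#{i ∈ s | x i ⬝ᵥ η < 0} : ℝ) ≤ #{i ∈ s | x i ⬝ᵥ η ≤ 0} :=
      Nat.cast_le.2 (card_le_card (monotone_filter_right s fun i _ => le_of_lt))
    nlinarith [h η hη]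

lemma Mu0ComplexOn.mul_card_le (h : Mu0ComplexOn x s μ) (hμ : 1 ≤ μ) {a : ℝ} (ha : 0 ≤ a)
    {f : Fin N → ℝ} (η : Fin d → ℝ) (hf : ∀ i ∈ s, 0 ≤ f i)
    (hfa : ∀ i ∈ s, x i ⬝ᵥ η ≤ 0 → a ≤ f i) : a * #s ≤ 2 * μ * ∑ i ∈ s, f i := by
  have hlarge : a * #{i ∈ s | x i ⬝ᵥ η ≤ 0} ≤ ∑ i ∈ s, f i := by
    calc a * #{i ∈ s | x i ⬝ᵥ η ≤ 0}
        = #{i ∈ s | x i ⬝ᵥ η ≤ 0} • a := by rw [nsmul_eq_mul, mul_comm]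
      _ ≤ ∑ i ∈ s with x i ⬝ᵥ η ≤ 0, f i :=
          card_nsmul_le_sum _ _ _ fun i hi => hfa i (mem_filter.1 hi).1 (mem_filter.1 hi).2
      _ ≤ ∑ i ∈ s, f i := sum_le_sum_of_subset_of_nonneg (filter_subset _ _) fun i hi _ => hf i hi
  calc a * #s ≤ a * (2 * μ * #{i ∈ s | x i ⬝ᵥ η ≤ 0}) :=
        mul_le_mul_of_nonneg_left (h.card_le hμ η) ha
    _ = 2 * μ * (a * #{i ∈ s | x i ⬝ᵥ η ≤ 0}) := by ring
    _ ≤ 2 * μ * ∑ i ∈ s, f i := by gcongr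

lemma Mu1ComplexOn.sum_abs_le (h : Mu1ComplexOn x s μ) (hμ : 1 ≤ μ) (η : Fin d → ℝ) :
    ∑ i ∈ s, |x i ⬝ᵥ η| ≤ 2 * μ * ∑ i ∈ s, max (x i ⬝ᵥ η) 0 := by
  have hneg := h (-η)
  simp only [dotProduct_neg, abs_neg, sum_filter, neg_nonneg, neg_lt_zero] at hneg
  have hminus (i : Fin N) :
      (if x i ⬝ᵥ η ≤ 0 then -(x i ⬝ᵥ η) else 0) = |x i ⬝ᵥ η| - max (x i ⬝ᵥ η) 0 := by
    split_ifs with hi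
    · rw [abs_of_nonpos hi, max_eq_right hi, sub_zero]
    · rw [abs_of_pos (not_le.1 hi), max_eq_left (not_le.1 hi).le, sub_self]
  have hplus (i : Fin N) :
      (if 0 < x i ⬝ᵥ η then |x i ⬝ᵥ η| else 0) = max (x i ⬝ᵥ η) 0 := by
    split_ifs with hi
    · rw [abs_of_pos hi, max_eq_left hi.le]
    · rw [max_eq_right (not_lt.1 hi)]
  simp only [hminus, hplus, sum_sub_distrib] at hneg
  nlinarith [sum_nonneg fun i (_ : i ∈ s) => le_max_right (x i ⬝ᵥ η) 0]

/- `ℓ₀`-complexity bounds the number of rows: `gfun` and `hfun` are at least `1 / 4` on the rows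
of one sign. `ℓ₁`-complexity and `gfun c z ≥ max z 0` bound the `ℓ₁`-norm on `s`, hence on `t`. -/
lemma card_add_sum_abs_le_objective {c : Fin N → ℝ} (hc : ∀ i, 0 ≤ c i ∧ c i ≤ 1 / 2)
    (hμ : 1 ≤ μ) (hs1 : Mu1ComplexOn x s μ) (hs0 : Mu0ComplexOn x s μ) (ht0 : Mu0ComplexOn x t μ)
    (η : Fin d → ℝ) (hts : ∑ i ∈ t, |x i ⬝ᵥ η| ≤ 2 * μ * ∑ i ∈ s, |x i ⬝ᵥ η|) :
    (#s : ℝ) + #t + (∑ i ∈ s, |x i ⬝ᵥ η| + ∑ i ∈ t, |x i ⬝ᵥ η|) ≤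
      14 * μ ^ 2 * (∑ i ∈ s, gfun (c i) (x i ⬝ᵥ η) + ∑ i ∈ t, hfun (c i) (x i ⬝ᵥ η)) := by
  have hc1 (i : Fin N) : c i ≤ 1 := (hc i).2.trans (by norm_num)
  have hg (i : Fin N) : max (x i ⬝ᵥ η) 0 ≤ gfun (c i) (x i ⬝ᵥ η) :=
    max_zero_le_gfun (hc i).1 (hc1 i) _
  have hg0 (i : Fin N) : 0 ≤ gfun (c i) (x i ⬝ᵥ η) := (le_max_right _ _).trans (hg i)
  have hh0 (i : Fin N) : 0 ≤ hfun (c i) (x i ⬝ᵥ η) := hfun_nonneg (hc i).1 (hc1 i) _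
  set G := ∑ i ∈ s, gfun (c i) (x i ⬝ᵥ η)
  set H := ∑ i ∈ t, hfun (c i) (x i ⬝ᵥ η)
  have hG0 : 0 ≤ G := sum_nonneg fun i _ => hg0 i
  have hH0 : 0 ≤ H := sum_nonneg fun i _ => hh0 i
  have hcard_s : 1 / 4 * (#s : ℝ) ≤ 2 * μ * G :=
    hs0.mul_card_le hμ (by norm_num) (-η) (fun i _ => hg0 i) fun i _ hi =>
      one_fourth_le_gfun (hc i).1 (hc1 i) (by simpa using hi)
  have hcard_t : 1 / 4 * (#t : ℝ) ≤ 2 * μ * H :=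
    ht0.mul_card_le hμ (by norm_num) η (fun i _ => hh0 i) fun i _ hi =>
      one_fourth_le_hfun (hc i).1 (hc i).2 hi
  have hl1_s : ∑ i ∈ s, |x i ⬝ᵥ η| ≤ 2 * μ * G :=
    (hs1.sum_abs_le hμ η).trans (by gcongr; exact sum_le_sum fun i _ => hg i)
  have hl1_t : ∑ i ∈ t, |x i ⬝ᵥ η| ≤ 4 * μ ^ 2 * G :=
    hts.trans ((mul_le_mul_of_nonneg_left hl1_s (by positivity)).trans_eq (by ring))
  have hμ2 : μ ≤ μ ^ 2 := le_self_pow₀ hμ two_ne_zero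
  have hG : μ * G ≤ μ ^ 2 * G := by gcongr
  have hH : μ * H ≤ μ ^ 2 * H := by gcongr
  nlinarith [mul_nonneg (sq_nonneg μ) hH0]

end Complexity

section Responses

variable {ι κ : Type*} [Fintype ι] [Fintype κ]

lemma neg_mul_dotProduct (b : ℝ) (v η : κ → ℝ) : (fun k => -b * v k) ⬝ᵥ η = -b * v ⬝ᵥ η :=
  smul_dotProduct (-b) v η

lemma sum_eq_sum_neg_one_add_sum_one {M : Type*} [AddCommMonoid M] {y : ι → ℝ}
    (hy : ∀ i, y i = 1 ∨ y i = -1) (f : ι → M) :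
    ∑ i, f i = ∑ i with y i = -1, f i + ∑ i with y i = 1, f i := by
  have hone (i : ι) : ¬y i = -1 ↔ y i = 1 := by
    rcases hy i with h | h <;> norm_num [h]
  simp only [← sum_filter_add_sum_filter_not univ (fun i => y i = -1) f, hone]

lemma sum_mul_irtLoss {y : ι → ℝ} (hy : ∀ i, y i = 1 ∨ y i = -1) (α : ι → κ → ℝ) (c w : ι → ℝ)
    (η : κ → ℝ) :
    ∑ i, w i * irtLoss (c i) (y i) (α i ⬝ᵥ η) =
      ∑ i with y i = -1, w i * gfun (c i) ((fun k => -y i * α i k) ⬝ᵥ η) +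
        ∑ i with y i = 1, w i * hfun (c i) ((fun k => -y i * α i k) ⬝ᵥ η) := by
  simp only [neg_mul_dotProduct]
  rw [sum_eq_sum_neg_one_add_sum_one hy]
  congr 1 <;> refine sum_congr rfl fun i hi => ?_ <;> rw [(mem_filter.1 hi).2] <;>
    norm_num [irtLoss]

lemma sum_irtLoss {y : ι → ℝ} (hy : ∀ i, y i = 1 ∨ y i = -1) (α : ι → κ → ℝ) (c : ι → ℝ)
    (η : κ → ℝ) :
    ∑ i, irtLoss (c i) (y i) (α i ⬝ᵥ η) =
      ∑ i with y i = -1, gfun (c i) ((fun k => -y i * α i k) ⬝ᵥ η) +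
        ∑ i with y i = 1, hfun (c i) ((fun k => -y i * α i k) ⬝ᵥ η) := by
  simpa using sum_mul_irtLoss hy α c 1 η

lemma card_add_sum_abs_le_sum_irtLoss {m d : ℕ} {y c : Fin m → ℝ} {α : Fin m → Fin d → ℝ}
    (hy : ∀ i, y i = 1 ∨ y i = -1) (hc : ∀ i, 0 ≤ c i ∧ c i ≤ 1 / 2) {μ : ℝ} (hμ : 1 ≤ μ)
    (hneg1 : Mu1ComplexOn (fun i k => -y i * α i k) {i | y i = -1} μ)
    (hneg0 : Mu0ComplexOn (fun i k => -y i * α i k) {i | y i = -1} μ)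
    (hpos0 : Mu0ComplexOn (fun i k => -y i * α i k) {i | y i = 1} μ) (η : Fin d → ℝ)
    (hbalance : ∑ i with y i = 1, |(fun k => -y i * α i k) ⬝ᵥ η| ≤
      2 * μ * ∑ i with y i = -1, |(fun k => -y i * α i k) ⬝ᵥ η|) :
    m + ∑ i, |α i ⬝ᵥ η| ≤ 14 * μ ^ 2 * ∑ i, irtLoss (c i) (y i) (α i ⬝ᵥ η) := by
  have habs (i : Fin m) : |α i ⬝ᵥ η| = |(fun k => -y i * α i k) ⬝ᵥ η| := by
    rw [neg_mul_dotProduct]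
    rcases hy i with h | h <;> simp [h]
  have hcard : (m : ℝ) = #{i | y i = -1} + #{i | y i = 1} := by
    simpa using sum_eq_sum_neg_one_add_sum_one hy (1 : Fin m → ℝ)
  rw [sum_irtLoss hy, hcard, sum_congr rfl fun i _ => habs i, sum_eq_sum_neg_one_add_sum_one hy]
  exact card_add_sum_abs_le_objective hc hμ hneg1 hneg0 hpos0 η hbalance

end Responses

theorem stmt1_general :
    ∃ C : ℝ, 0 < C ∧
      ∀ (d m n : ℕ), 3 ≤ m →
      ∀ (α : Fin m → Fin d → ℝ) (c : Fin m → ℝ), (∀ i, 0 < c i ∧ c i ≤ 1 / 2) →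
      ∀ E : ℝ, (∀ i, Real.log (1 / c i) ≤ E) →
      ∀ Y : Fin m → Fin n → ℝ, (∀ i j, Y i j = 1 ∨ Y i j = -1) →
      ∀ μ ε : ℝ, 1 ≤ μ → 0 < ε → ε ≤ 1 →
        (∀ j : Fin n,
          Mu1ComplexOn (fun i k => -Y i j * α i k) {i | Y i j = -1} μ ∧
          Mu0ComplexOn (fun i k => -Y i j * α i k) {i | Y i j = -1} μ ∧
          Mu0ComplexOn (fun i k => -Y i j * α i k) {i | Y i j = 1} μ) →
        (∀ (j : Fin n) (η : Fin d → ℝ),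
          ∑ i with Y i j = 1, |(fun k => -Y i j * α i k) ⬝ᵥ η| ≤
            2 * μ * ∑ i with Y i j = -1, |(fun k => -Y i j * α i k) ⬝ᵥ η|) →
        ∃ w : Fin m → ℝ, (∀ i, 0 ≤ w i) ∧
          (#{i | w i ≠ 0} : ℝ) ≤
            C * (1 + E) * ((d + 1) ^ 2 * μ ^ 2 * √m / ε ^ 2) * (Real.log m + Real.log n) ∧
          ∀ (j : Fin n) (η : Fin d → ℝ),
            |∑ i with Y i j = -1, w i * gfun (c i) ((fun k => -Y i j * α i k) ⬝ᵥ η) +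
                ∑ i with Y i j = 1, w i * hfun (c i) ((fun k => -Y i j * α i k) ⬝ᵥ η) -
                (∑ i with Y i j = -1, gfun (c i) ((fun k => -Y i j * α i k) ⬝ᵥ η) +
                  ∑ i with Y i j = 1, hfun (c i) ((fun k => -Y i j * α i k) ⬝ᵥ η))| ≤
              ε * (∑ i with Y i j = -1, gfun (c i) ((fun k => -Y i j * α i k) ⬝ᵥ η) +
                ∑ i with Y i j = 1, hfun (c i) ((fun k => -Y i j * α i k) ⬝ᵥ η)) := by
  refine ⟨32256, by norm_num, fun d m n hm α c hc E hE Y hY μ ε hμ hε hε1 hcomplex hbalance => ?_⟩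
  have hE0 : 0 ≤ E := by
    obtain ⟨hci, hci'⟩ := hc ⟨0, by lia⟩
    exact (Real.log_nonneg (one_le_one_div hci (by linarith))).trans (hE _)
  have hL : 1 ≤ 14 * μ ^ 2 := by linarith [one_le_pow₀ hμ (n := 2)]
  obtain ⟨w, hw0, hwcard, hw⟩ := exists_coreset_matrix (J := Fin n) α (by simpa)
    (fun j i => isTameLoss_irtLoss (hc i).1 (hc i).2 (hE i) (Y i j)) (by linarith) hL
    (fun j η => by
      obtain ⟨hneg1, hneg0, hpos0⟩ := hcomplex j
      simpa using card_add_sum_abs_le_sum_irtLoss (hY · j) (fun i => ⟨(hc i).1.le, (hc i).2⟩) hμ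
        hneg1 hneg0 hpos0 η (hbalance j η)) hε hε1
  refine ⟨w, hw0, hwcard.trans ?_, fun j η => ?_⟩
  · simp only [Fintype.card_fin]
    calc 1152 * (2 + E) * (14 * μ ^ 2 * (d + 1) ^ 2 * √m / ε ^ 2) * (Real.log m + Real.log n)
        ≤ 1152 * (2 * (1 + E)) * (14 * μ ^ 2 * (d + 1) ^ 2 * √m / ε ^ 2) *
            (Real.log m + Real.log n) := by
          gcongr
          linarith
      _ = 32256 * (1 + E) * ((d + 1) ^ 2 * μ ^ 2 * √m / ε ^ 2) * (Real.log m + Real.log n) := by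
          ring
  · rw [← sum_mul_irtLoss (hY · j), ← sum_irtLoss (hY · j)]
    exact hw j η

/-- Coresets for the 3PL IRT model (ability-parameter subproblems): one nonnegative
weight vector of small support is a `(1+ε)`-coreset simultaneously for all `n`
objectives `F_j`. -/
theorem stmt1 :
    ∃ C : ℝ, 0 < C ∧
      ∀ (m n : ℕ), 3 ≤ m → 3 ≤ n →
      ∀ (α : Fin m → Fin 2 → ℝ) (c : Fin m → ℝ) (cmin : ℝ),
        0 < cmin → cmin < 1 / 2 → (∀ i, cmin ≤ c i ∧ c i < 1 / 2) →
      ∀ E : ℝ, IsGreatest (Set.range fun i : Fin m => Real.log (1 / c i)) E →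
      ∀ Y : Fin m → Fin n → ℝ, (∀ i j, Y i j = 1 ∨ Y i j = -1) →
      ∀ μ ε : ℝ, 1 ≤ μ → 0 < ε → ε < 1 / 2 →
        (∀ j : Fin n,
          Mu1ComplexOn (fun i k => -Y i j * α i k)
            (Finset.univ.filter fun i => Y i j = -1) μ ∧
          Mu0ComplexOn (fun i k => -Y i j * α i k)
            (Finset.univ.filter fun i => Y i j = -1) μ ∧
          Mu1ComplexOn (fun i k => -Y i j * α i k)
            (Finset.univ.filter fun i => Y i j = 1) μ ∧
          Mu0ComplexOn (fun i k => -Y i j * α i k)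
            (Finset.univ.filter fun i => Y i j = 1) μ) →
        (∀ (j : Fin n) (η : Fin 2 → ℝ),
          ∑ i ∈ Finset.univ.filter (fun i => Y i j = -1),
              |(fun k => -Y i j * α i k) ⬝ᵥ η| ≤
            2 * μ * ∑ i ∈ Finset.univ.filter (fun i => Y i j = 1),
              |(fun k => -Y i j * α i k) ⬝ᵥ η|) →
        (∀ (j : Fin n) (η : Fin 2 → ℝ),
          ∑ i ∈ Finset.univ.filter (fun i => Y i j = 1),
              |(fun k => -Y i j * α i k) ⬝ᵥ η| ≤
            2 * μ * ∑ i ∈ Finset.univ.filter (fun i => Y i j = -1),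
              |(fun k => -Y i j * α i k) ⬝ᵥ η|) →
        ∃ w : Fin m → ℝ, (∀ i, 0 ≤ w i) ∧
          ((Finset.univ.filter fun i => w i ≠ 0).card : ℝ) ≤
            C * (1 + E) * (μ ^ 2 * Real.sqrt m / ε ^ 2) *
              ((Real.log m) ^ 2 + Real.log n) ∧
          ∀ (j : Fin n) (η : Fin 2 → ℝ),
            |(∑ i ∈ Finset.univ.filter (fun i => Y i j = -1),
                  w i * gfun (c i) ((fun k => -Y i j * α i k) ⬝ᵥ η)) +
                (∑ i ∈ Finset.univ.filter (fun i => Y i j = 1),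
                  w i * hfun (c i) ((fun k => -Y i j * α i k) ⬝ᵥ η)) -
                ((∑ i ∈ Finset.univ.filter (fun i => Y i j = -1),
                    gfun (c i) ((fun k => -Y i j * α i k) ⬝ᵥ η)) +
                  ∑ i ∈ Finset.univ.filter (fun i => Y i j = 1),
                    hfun (c i) ((fun k => -Y i j * α i k) ⬝ᵥ η))| ≤
              ε * ((∑ i ∈ Finset.univ.filter (fun i => Y i j = -1),
                  gfun (c i) ((fun k => -Y i j * α i k) ⬝ᵥ η)) +
                ∑ i ∈ Finset.univ.filter (fun i => Y i j = 1),
                  hfun (c i) ((fun k => -Y i j * α i k) ⬝ᵥ η)) := by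
  obtain ⟨C, hC, hcoreset⟩ := stmt1_general
  refine ⟨9 * C, by positivity, fun m n hm _ α c cmin hcmin _ hc E hE Y hY μ ε hμ hε hε1 hcomplex
    _ hbalance => ?_⟩
  have hc0 (i : Fin m) : 0 < c i ∧ c i ≤ 1 / 2 := ⟨hcmin.trans_le (hc i).1, (hc i).2.le⟩
  obtain ⟨w, hw0, hwcard, hw⟩ := hcoreset 2 m n hm α c hc0 E (fun i => hE.2 ⟨i, rfl⟩) Y hY μ ε hμ hε
    (by linarith) (fun j => ⟨(hcomplex j).1, (hcomplex j).2.1, (hcomplex j).2.2.2⟩) hbalance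
  refine ⟨w, hw0, hwcard.trans ?_, hw⟩
  have hlog : Real.log m ≤ Real.log m ^ 2 :=
    le_self_pow₀ (one_le_log_of_three_le (by exact_mod_cast hm)) two_ne_zero
  have hE0 : 0 ≤ E := by
    obtain ⟨⟨i, rfl⟩, -⟩ := hE
    exact Real.log_nonneg (one_le_one_div (hc0 i).1 (by linarith [(hc0 i).2]))
  calc C * (1 + E) * (((2 : ℕ) + 1) ^ 2 * μ ^ 2 * √m / ε ^ 2) * (Real.log m + Real.log n)
      = 9 * C * (1 + E) * (μ ^ 2 * √m / ε ^ 2) * (Real.log m + Real.log n) := by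
        push_cast
        ring
    _ ≤ 9 * C * (1 + E) * (μ ^ 2 * √m / ε ^ 2) * (Real.log m ^ 2 + Real.log n) := by gcongr
end

section
/- Let μ₁ ≥ 1. Let X' ∈ ℝ^{m'×2} be μ₁-complex in the ℓ₁ sense and X'' ∈ ℝ^{m''×2} satisfy ‖X''η‖₁ ≤ 2μ₁·‖X'η‖₁ for all η ∈ ℝ². Let X ∈ ℝ^{m×2} (m = m'+m'') be the vertical concatenation of X' and X'', let U ∈ ℝ^{m×2} have orthonormal columns (UᵀU = I₂) with X = U·R for some R ∈ ℝ^{2×2}, and let c_1,…,c_{m'} ∈ [0,1/2). Define f₁(Xβ) = ∑_{i=1}^{m'} g_{c_i}(x'_i·β), where x'_i are the rows of X'. If ℓ ∈ [m'] and β ∈ ℝ² satisfy x'_ℓ·β ≥ ln(1+√3), then g_{c_ℓ}(x'_ℓ·β) ≤ 12·μ₁²·‖U_ℓ‖₂·f₁(Xβ), where U_ℓ is the row of U corresponding to row ℓ of X'. -/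
/-!
At a margin `z ≥ ln(1+√3)` one has `2(1+e^z) ≤ e^{2z}`, so `g_c(z) ≤ ln(1+e^z) + ln 2 ≤ 2z`.
Since `U` has orthonormal columns and `Xβ = U(Rβ)`, Cauchy–Schwarz gives
`z = U_ℓ · Rβ ≤ ‖U_ℓ‖₂ ‖Rβ‖₂ = ‖U_ℓ‖₂ ‖Xβ‖₂ ≤ ‖U_ℓ‖₂ ‖Xβ‖₁`. The hypotheses on `X'` and `X''` yield
`‖Xβ‖₁ ≤ (1 + 2μ₁) ‖X'β‖₁ ≤ (1 + 2μ₁)(1 + μ₁) ‖(X'β)⁺‖₁ ≤ 6μ₁² ‖(X'β)⁺‖₁`, and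
`‖(X'β)⁺‖₁ ≤ f₁(Xβ)` because `z⁺ ≤ g_c(z)`.
-/

open Finset Matrix

/-- The rows `x` are `μ₁`-complex in the ℓ₁ sense. -/
def Mu1Complex {ι : Type} [Fintype ι] {d : ℕ} (x : ι → Fin d → ℝ) (μ : ℝ) : Prop :=
  ∀ η : Fin d → ℝ,
    ∑ i ∈ Finset.univ.filter (fun i => 0 ≤ x i ⬝ᵥ η), x i ⬝ᵥ η ≤
      μ * ∑ i ∈ Finset.univ.filter (fun i => x i ⬝ᵥ η < 0), |x i ⬝ᵥ η|

section ShiftedLogistic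

variable {c z : ℝ}

lemma posPart_le_gfun (hc_nonneg : 0 ≤ c) (hc_lt : c < 1) : z⁺ ≤ gfun c z := by
  have log_one_sub_nonpos : Real.log (1 - c) ≤ 0 := Real.log_nonpos (by linarith) (by linarith)
  have posPart_le_log : z⁺ ≤ Real.log (1 + Real.exp z) := by
    refine sup_le ?_ (Real.log_nonneg (by linarith [Real.exp_pos z]))
    rw [Real.le_log_iff_exp_le (by positivity)]
    linarith
  unfold gfun
  linarith

lemma two_mul_one_add_exp_le_exp_two_mul (hz : Real.log (1 + √3) ≤ z) :
    2 * (1 + Real.exp z) ≤ Real.exp (2 * z) := by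
  have one_add_sqrt_three_le : 1 + √3 ≤ Real.exp z :=
    (Real.log_le_iff_le_exp (by positivity)).1 hz
  -- `1 + √3` is the larger root of `y² - 2y - 2`.
  have three_le_sq : 3 ≤ (Real.exp z - 1) ^ 2 :=
    Real.sqrt_le_iff.1 (by linarith : √3 ≤ Real.exp z - 1) |>.2
  rw [two_mul z, Real.exp_add]
  linarith

lemma gfun_le_two_mul (hc : c ≤ 1 / 2) (hz : Real.log (1 + √3) ≤ z) : gfun c z ≤ 2 * z := by
  have neg_log_two_le : -Real.log 2 ≤ Real.log (1 - c) := by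
    rw [← Real.log_inv]
    exact Real.log_le_log (by norm_num) (by linarith)
  calc gfun c z ≤ Real.log 2 + Real.log (1 + Real.exp z) := by unfold gfun; linarith
    _ = Real.log (2 * (1 + Real.exp z)) := (Real.log_mul two_ne_zero (by positivity)).symm
    _ ≤ Real.log (Real.exp (2 * z)) :=
      Real.log_le_log (by positivity) (two_mul_one_add_exp_le_exp_two_mul hz)
    _ = 2 * z := Real.log_exp _

end ShiftedLogistic

section OrthonormalColumns

variable {ι κ : Type*} [Fintype ι] [Fintype κ] [DecidableEq κ] {U : Matrix ι κ ℝ}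

lemma sum_mulVec_sq_of_transpose_mul_self_eq_one (hU : Uᵀ * U = 1) (v : κ → ℝ) :
    ∑ i, (U *ᵥ v) i ^ 2 = ∑ k, v k ^ 2 := by
  have dotProduct_eq : (U *ᵥ v) ⬝ᵥ (U *ᵥ v) = v ⬝ᵥ v := by
    rw [dotProduct_mulVec, ← mulVec_transpose, mulVec_mulVec, hU, one_mulVec]
  simpa only [dotProduct, ← sq] using dotProduct_eq

lemma mulVec_apply_le_of_transpose_mul_self_eq_one (hU : Uᵀ * U = 1) (v : κ → ℝ) (j : ι) :
    (U *ᵥ v) j ≤ √(∑ k, U j k ^ 2) * ∑ i, |(U *ᵥ v) i| := by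
  have l2_le_l1 : √(∑ i, (U *ᵥ v) i ^ 2) ≤ ∑ i, |(U *ᵥ v) i| := by
    refine Real.sqrt_le_iff.2 ⟨sum_nonneg fun _ _ ↦ abs_nonneg _, ?_⟩
    simpa only [sq_abs] using
      sum_sq_le_sq_sum_of_nonneg (s := univ) fun i _ ↦ abs_nonneg ((U *ᵥ v) i)
  calc (U *ᵥ v) j ≤ √(∑ k, U j k ^ 2) * √(∑ k, v k ^ 2) := Real.sum_mul_le_sqrt_mul_sqrt _ _ _
    _ = √(∑ k, U j k ^ 2) * √(∑ i, (U *ᵥ v) i ^ 2) := by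
      rw [sum_mulVec_sq_of_transpose_mul_self_eq_one hU]
    _ ≤ √(∑ k, U j k ^ 2) * ∑ i, |(U *ᵥ v) i| := by gcongr

end OrthonormalColumns

namespace Mu1Complex

variable {ι : Type} [Fintype ι] {d : ℕ} {x : ι → Fin d → ℝ} {μ : ℝ}

lemma sum_negPart_le (hx : Mu1Complex x μ) (η : Fin d → ℝ) :
    ∑ i, (x i ⬝ᵥ η)⁻ ≤ μ * ∑ i, (x i ⬝ᵥ η)⁺ := by
  have complex_neg := hx (-η)
  simp only [dotProduct_neg, abs_neg, neg_nonneg, neg_lt_zero, sum_filter] at complex_neg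
  convert complex_neg using 3 with i _ i
  · split_ifs with h
    · exact negPart_of_nonpos h
    · exact negPart_of_nonneg (not_le.1 h).le
  · split_ifs with h
    · rw [posPart_of_nonneg h.le, abs_of_pos h]
    · exact posPart_of_nonpos (not_lt.1 h)

lemma sum_abs_le (hx : Mu1Complex x μ) (η : Fin d → ℝ) :
    ∑ i, |x i ⬝ᵥ η| ≤ (1 + μ) * ∑ i, (x i ⬝ᵥ η)⁺ := by
  simp only [← posPart_add_negPart, sum_add_distrib]
  linarith [hx.sum_negPart_le η]

lemma sum_abs_add_le (hx : Mu1Complex x μ) (hμ : 1 ≤ μ) {η : Fin d → ℝ} {t : ℝ}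
    (ht : t ≤ 2 * μ * ∑ i, |x i ⬝ᵥ η|) :
    ∑ i, |x i ⬝ᵥ η| + t ≤ 6 * μ ^ 2 * ∑ i, (x i ⬝ᵥ η)⁺ := by
  have sum_posPart_nonneg : 0 ≤ ∑ i, (x i ⬝ᵥ η)⁺ := sum_nonneg fun _ _ ↦ posPart_nonneg _
  calc ∑ i, |x i ⬝ᵥ η| + t ≤ (1 + 2 * μ) * ∑ i, |x i ⬝ᵥ η| := by linarith
    _ ≤ (1 + 2 * μ) * ((1 + μ) * ∑ i, (x i ⬝ᵥ η)⁺) := by gcongr; exact hx.sum_abs_le η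
    _ = (1 + 2 * μ) * (1 + μ) * ∑ i, (x i ⬝ᵥ η)⁺ := by ring
    _ ≤ 6 * μ ^ 2 * ∑ i, (x i ⬝ᵥ η)⁺ :=
      mul_le_mul_of_nonneg_right (by nlinarith) sum_posPart_nonneg

end Mu1Complex

theorem stmt11_general {ι' : Type} {ι'' κ : Type*} [Fintype ι'] [Fintype ι''] [Fintype κ]
    [DecidableEq κ] {d : ℕ} {μ : ℝ} (hμ : 1 ≤ μ)
    {X' : Matrix ι' (Fin d) ℝ} {X'' : Matrix ι'' (Fin d) ℝ}
    {U : Matrix (ι' ⊕ ι'') κ ℝ} {R : Matrix κ (Fin d) ℝ}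
    (hU : Uᵀ * U = 1) (hXUR : fromRows X' X'' = U * R) (hX' : Mu1Complex X' μ)
    {β : Fin d → ℝ} (hX'' : ∑ i, |X'' i ⬝ᵥ β| ≤ 2 * μ * ∑ i, |X' i ⬝ᵥ β|)
    {c : ι' → ℝ} (hc : ∀ i, c i ∈ Set.Ico 0 1) {ℓ : ι'} (hcℓ : c ℓ ≤ 1 / 2)
    (hβ : Real.log (1 + √3) ≤ X' ℓ ⬝ᵥ β) :
    gfun (c ℓ) (X' ℓ ⬝ᵥ β) ≤
      12 * μ ^ 2 * √(∑ k, U (Sum.inl ℓ) k ^ 2) * ∑ i, gfun (c i) (X' i ⬝ᵥ β) := by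
  have mulVec_eq : U *ᵥ (R *ᵥ β) = Sum.elim (X' *ᵥ β) (X'' *ᵥ β) := by
    rw [mulVec_mulVec, ← hXUR, fromRows_mulVec]
  have margin_le : X' ℓ ⬝ᵥ β ≤
      √(∑ k, U (Sum.inl ℓ) k ^ 2) * (∑ i, |X' i ⬝ᵥ β| + ∑ i, |X'' i ⬝ᵥ β|) := by
    have entry_le := mulVec_apply_le_of_transpose_mul_self_eq_one hU (R *ᵥ β) (Sum.inl ℓ)
    rwa [mulVec_eq, Fintype.sum_sum_type] at entry_le
  have sum_posPart_le : ∑ i, (X' i ⬝ᵥ β)⁺ ≤ ∑ i, gfun (c i) (X' i ⬝ᵥ β) :=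
    sum_le_sum fun i _ ↦ posPart_le_gfun (hc i).1 (hc i).2
  calc gfun (c ℓ) (X' ℓ ⬝ᵥ β) ≤ 2 * (X' ℓ ⬝ᵥ β) := gfun_le_two_mul hcℓ hβ
    _ ≤ 2 * (√(∑ k, U (Sum.inl ℓ) k ^ 2) * (∑ i, |X' i ⬝ᵥ β| + ∑ i, |X'' i ⬝ᵥ β|)) := by
      gcongr
    _ ≤ 2 * (√(∑ k, U (Sum.inl ℓ) k ^ 2) * (6 * μ ^ 2 * ∑ i, gfun (c i) (X' i ⬝ᵥ β))) := by
      gcongr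
      exact (hX'.sum_abs_add_le hμ hX'').trans (by gcongr)
    _ = 12 * μ ^ 2 * √(∑ k, U (Sum.inl ℓ) k ^ 2) * ∑ i, gfun (c i) (X' i ⬝ᵥ β) := by ring

/-- Sensitivity bound for the shifted logistic summands at indices with large
positive margin: if `x'_ℓ·β ≥ ln(1+√3)`, then
`g_{c_ℓ}(x'_ℓ·β) ≤ 12 μ₁² ‖U_ℓ‖₂ · f₁(Xβ)`, where `U` is an orthonormal-column
factor of the vertical concatenation `X` of `X'` and `X''`. -/
theorem stmt11 {m' m'' : ℕ} (μ1 : ℝ) (hμ : 1 ≤ μ1)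
    (X' : Fin m' → Fin 2 → ℝ) (X'' : Fin m'' → Fin 2 → ℝ)
    (hX' : Mu1Complex X' μ1)
    (hX'' : ∀ η : Fin 2 → ℝ, ∑ i, |X'' i ⬝ᵥ η| ≤ 2 * μ1 * ∑ i, |X' i ⬝ᵥ η|)
    (U : Fin m' ⊕ Fin m'' → Fin 2 → ℝ)
    (hU : ∀ k l : Fin 2, ∑ i, U i k * U i l = if k = l then (1 : ℝ) else 0)
    (R : Matrix (Fin 2) (Fin 2) ℝ)
    (hXUR : ∀ i k, Sum.elim X' X'' i k = ∑ l, U i l * R l k)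
    (c : Fin m' → ℝ) (hc : ∀ i, 0 ≤ c i ∧ c i < 1 / 2)
    (ℓ : Fin m') (β : Fin 2 → ℝ)
    (hβ : Real.log (1 + Real.sqrt 3) ≤ X' ℓ ⬝ᵥ β) :
    gfun (c ℓ) (X' ℓ ⬝ᵥ β) ≤
      12 * μ1 ^ 2 * Real.sqrt (∑ k, (U (Sum.inl ℓ) k) ^ 2) *
        ∑ i, gfun (c i) (X' i ⬝ᵥ β) :=
  stmt11_general hμ (Matrix.ext hU) (Matrix.ext hXUR) hX' (hX'' β)
    (fun i ↦ ⟨(hc i).1, by linarith [(hc i).2]⟩) (hc ℓ).2.le hβ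
end
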